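/- arXiv:2010.15888 — 4 statements merged into one kernel-verified Lean document; each statement's English description precedes it below -/
import Mathlib

section
/- Let n ≥ 2 and let G be an almost controllable graph on Fin n with twins τ < τ′ such that the (τ,n)-cofactor of W(G) equals ±2^{⌊n/2⌋−1}·b for an odd, square-free, positive integer b. Let p be an odd prime dividing b, let β ∈ 𝔽_pⁿ be a nonzero vector with Ŵ(G)ᵀβ = 0 over 𝔽_p, and let λ₀ ∈ 𝔽_p satisfy A(G)·β = λ₀·β over 𝔽_p. Then there exists a vector x ∈ 𝔽_pⁿ with W(G)ᵀx = 0 and (A(G) − λ₁(G)·I)x ≠ 0 over 𝔽_p if and only if λ₀ ≠ λ₁(G) in 𝔽_p. -/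
/-!
By twinness `α` is an eigenvector of `A` for `λ₁` and `αᵀ W = 0`, and expanding along the last
column gives `det Ŵ = -2 ξ_τ`, where `ξ_τ` is the `(τ, n)`-cofactor of `W` (`det_hatW`). As `p` is
odd and `b` square-free, `p ^ 2 ∤ det Ŵ`, so `Ŵ` has corank at most one modulo `p` (`sq_dvd_det`) and
the kernel of `Ŵᵀ` over `𝔽_p` is spanned by `β`. Since `α ⬝ᵥ α = 2 ≠ 0` in `𝔽_p`, subtracting the
`α`-component from a kernel vector of `Wᵀ` yields a kernel vector of `Ŵᵀ`; hence the kernel of `Wᵀ`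
lies in the span of `α` and `β`. If `λ₀ = λ₁`, this whole span is killed by `A - λ₁`. Conversely
`β` itself lies in the kernel of `Wᵀ`, and `(A - λ₁) β = (λ₀ - λ₁) β`.
-/

open Matrix

namespace AlmostControllableGraphs

variable {n : ℕ}

/-- The all-ones vector. -/
def eVec (m : ℕ) : Fin m → ℤ := fun _ => 1

/-- The walk matrix `W(G) = [e, Ae, A²e, …, A^{n-1}e]` (columns indexed by `Fin (n+2)`). -/
def walkMatrix (A : Matrix (Fin (n + 2)) (Fin (n + 2)) ℤ) :
    Matrix (Fin (n + 2)) (Fin (n + 2)) ℤ :=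
  Matrix.of fun i j => ((A ^ (j : ℕ)) *ᵥ eVec (n + 2)) i

/-- `G` is almost controllable if its walk matrix has rank `n - 1` over `ℚ`. -/
def IsAlmostControllable (A : Matrix (Fin (n + 2)) (Fin (n + 2)) ℤ) : Prop :=
  ((walkMatrix A).map ((↑) : ℤ → ℚ)).rank = n + 1

/-- The matrix `V = [e, Ae, …, A^{n-2}e]`, the first `n - 1` columns of the walk matrix. -/
def Vmat (A : Matrix (Fin (n + 2)) (Fin (n + 2)) ℤ) :
    Matrix (Fin (n + 2)) (Fin (n + 1)) ℤ :=
  Matrix.of fun i j => walkMatrix A i j.castSucc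

/-- The matrix obtained from `V` by deleting row `i`. -/
def Xmat (A : Matrix (Fin (n + 2)) (Fin (n + 2)) ℤ) (i : Fin (n + 2)) :
    Matrix (Fin (n + 1)) (Fin (n + 1)) ℤ :=
  Matrix.of fun r c => Vmat A (i.succAbove r) c

/-- The `(i, n)`-cofactor of the walk matrix: `(−1)^{n+i}` times the determinant of the
matrix obtained by deleting row `i` and the last column from `W(G)`.
(In 0-based indexing the sign is `(−1)^{i + (n-1)}`.) -/
def cofactorLast (A : Matrix (Fin (n + 2)) (Fin (n + 2)) ℤ) (i : Fin (n + 2)) : ℤ :=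
  (-1 : ℤ) ^ ((i : ℕ) + (n + 1)) * (Xmat A i).det

/-- The vector `ξ(G)` of last-column cofactors of the walk matrix. -/
def xiVec (A : Matrix (Fin (n + 2)) (Fin (n + 2)) ℤ) : Fin (n + 2) → ℤ :=
  fun i => cofactorLast A i

/-- The rational scalar `2^{1 - ⌊n/2⌋}`. -/
def twoPow (n : ℕ) : ℚ := (2 : ℚ) ^ ((1 : ℤ) - (((n + 2) / 2 : ℕ) : ℤ))

/-- The matrix `W_δ(G) = [e, Ae, …, A^{n-2}e, (−1)^δ·2^{1-⌊n/2⌋}·ξ(G)]`. -/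
def Wdelta (A : Matrix (Fin (n + 2)) (Fin (n + 2)) ℤ) (δ : ℕ) :
    Matrix (Fin (n + 2)) (Fin (n + 2)) ℚ :=
  Matrix.of fun i j =>
    if (j : ℕ) = n + 1 then (-1 : ℚ) ^ δ * twoPow n * (xiVec A i : ℚ)
    else ((walkMatrix A i j : ℤ) : ℚ)

/-- A matrix is regular orthogonal if it is orthogonal and has all row sums equal to 1. -/
def IsRegularOrthogonal {K : Type*} [Field K] {m : ℕ} (Q : Matrix (Fin m) (Fin m) K) : Prop :=
  Qᵀ * Q = 1 ∧ Q *ᵥ (fun _ => (1 : K)) = fun _ => 1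

/-- Adjacency matrix of the complement graph. -/
def complMat (A : Matrix (Fin (n + 2)) (Fin (n + 2)) ℤ) :
    Matrix (Fin (n + 2)) (Fin (n + 2)) ℤ :=
  Matrix.of fun i j => if i = j then 0 else 1 - A i j

/-- Two graphs are generalized cospectral if they are cospectral and so are their complements. -/
def GenCospectral (A B : Matrix (Fin (n + 2)) (Fin (n + 2)) ℤ) : Prop :=
  A.charpoly = B.charpoly ∧ (complMat A).charpoly = (complMat B).charpoly

/-- `τ` and `τ'` are twins: the transposition swapping them is an automorphism. -/
def IsTwinPair (A : Matrix (Fin (n + 2)) (Fin (n + 2)) ℤ) (τ τ' : Fin (n + 2)) : Prop :=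
  ∀ i j, A (Equiv.swap τ τ' i) (Equiv.swap τ τ' j) = A i j

/-- `λ₁(G) = −1` if the twins are adjacent and `0` otherwise; for a 0-1 matrix this
is `−A τ τ'`. -/
def lam1 (A : Matrix (Fin (n + 2)) (Fin (n + 2)) ℤ) (τ τ' : Fin (n + 2)) : ℤ :=
  -(A τ τ')

/-- The vector `α(G)` with entry `−1` at `τ`, `1` at `τ'`, and `0` elsewhere. -/
def alphaVec (τ τ' : Fin (n + 2)) : Fin (n + 2) → ℤ :=
  fun i => if i = τ then -1 else if i = τ' then 1 else 0

/-- The reduction of `α(G)` modulo `p`. -/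
def alphaVecMod (p : ℕ) (τ τ' : Fin (n + 2)) : Fin (n + 2) → ZMod p :=
  fun i => ((alphaVec τ τ' i : ℤ) : ZMod p)

/-- The matrix `Ŵ(G) = [e, Ae, …, A^{n-2}e, α(G)]`. -/
def hatW (A : Matrix (Fin (n + 2)) (Fin (n + 2)) ℤ) (τ τ' : Fin (n + 2)) :
    Matrix (Fin (n + 2)) (Fin (n + 2)) ℤ :=
  Matrix.of fun i j => if (j : ℕ) = n + 1 then alphaVec τ τ' i else walkMatrix A i j

/-- The level of a rational matrix: the smallest positive integer `ℓ` such that `ℓQ` is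
an integer matrix. -/
noncomputable def level {m : ℕ} (Q : Matrix (Fin m) (Fin m) ℚ) : ℕ :=
  sInf {k : ℕ | 0 < k ∧ ∀ i j, ((k : ℚ) * Q i j).den = 1}

/-- A permutation matrix. -/
def IsPermMatrix {m : ℕ} (Q : Matrix (Fin m) (Fin m) ℚ) : Prop :=
  ∃ σ : Equiv.Perm (Fin m), ∀ i j, Q i j = if σ i = j then 1 else 0

/-- `G` is determined by its generalized spectrum: every graph generalized cospectral with
`G` is isomorphic to `G`. -/
def IsDGS (A : Matrix (Fin (n + 2)) (Fin (n + 2)) ℤ) : Prop :=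
  ∀ B : Matrix (Fin (n + 2)) (Fin (n + 2)) ℤ, B.IsAdjMatrix → GenCospectral A B →
    ∃ σ : Equiv.Perm (Fin (n + 2)), ∀ i j, B i j = A (σ i) (σ j)


/-- A swap-invariant vector stays swap-invariant under multiplication by `A`, so twins have
equal rows in the walk matrix. -/
lemma walk_twin {A : Matrix (Fin (n + 2)) (Fin (n + 2)) ℤ} {τ τ' : Fin (n + 2)}
    (htw : IsTwinPair A τ τ') (k : ℕ) (i : Fin (n + 2)) :
    ((A ^ k) *ᵥ eVec (n + 2)) (Equiv.swap τ τ' i) = ((A ^ k) *ᵥ eVec (n + 2)) i := by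
  induction k generalizing i with
  | zero => simp [eVec]
  | succ k ih =>
    rw [pow_succ', ← Matrix.mulVec_mulVec]
    generalize (A ^ k) *ᵥ eVec (n + 2) = f at ih
    simp only [Matrix.mulVec, dotProduct]
    rw [← Equiv.sum_comp (Equiv.swap τ τ')]
    exact Finset.sum_congr rfl fun j _ => by rw [htw i j, ih j]

lemma walkMatrix_twin {A : Matrix (Fin (n + 2)) (Fin (n + 2)) ℤ} {τ τ' : Fin (n + 2)}
    (htw : IsTwinPair A τ τ') (j : Fin (n + 2)) :
    walkMatrix A τ' j = walkMatrix A τ j := by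
  have h := walk_twin htw (j : ℕ) τ
  rwa [Equiv.swap_apply_left] at h

/-- `W(G)` with its last column replaced by `v`. -/
def lastReplaced (A : Matrix (Fin (n + 2)) (Fin (n + 2)) ℤ) (v : Fin (n + 2) → ℤ) :
    Matrix (Fin (n + 2)) (Fin (n + 2)) ℤ :=
  Matrix.of fun i j => if (j : ℕ) = n + 1 then v i else walkMatrix A i j

lemma det_lastReplaced (A : Matrix (Fin (n + 2)) (Fin (n + 2)) ℤ) (v : Fin (n + 2) → ℤ) :
    (lastReplaced A v).det = ∑ i, v i * cofactorLast A i := by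
  rw [Matrix.det_succ_column _ (Fin.last (n + 1))]
  refine Finset.sum_congr rfl fun i _ => ?_
  have h : (lastReplaced A v).submatrix i.succAbove (Fin.last (n + 1)).succAbove = Xmat A i := by
    ext r c
    have hc : (c : ℕ) ≠ n + 1 := c.isLt.ne
    simp [lastReplaced, Xmat, Vmat, hc]
  rw [h]
  simp only [lastReplaced, cofactorLast, Matrix.of_apply, Fin.val_last, if_true]
  ring

lemma sum_alphaVec_mul {R : Type*} [CommRing R] {τ τ' : Fin (n + 2)} (h : τ ≠ τ')
    (f : Fin (n + 2) → R) :
    ∑ i, ((alphaVec τ τ' i : ℤ) : R) * f i = f τ' - f τ := by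
  have h1 : ∀ i, ((alphaVec τ τ' i : ℤ) : R) * f i
      = (if i = τ' then f i else 0) - (if i = τ then f i else 0) := by
    intro i
    unfold alphaVec
    by_cases h1 : i = τ
    · subst h1; simp [h]
    · by_cases h2 : i = τ' <;> simp [h1, h2, h.symm]
  simp [h1, Finset.sum_sub_distrib]

/-- The rows of `W(G)` at the twins agree, so replacing the last column by the indicator vector
of `{τ, τ'}` gives a singular matrix; hence the cofactors at the twins are opposite. -/
lemma cofactor_twin {A : Matrix (Fin (n + 2)) (Fin (n + 2)) ℤ} {τ τ' : Fin (n + 2)}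
    (h : τ ≠ τ') (htw : IsTwinPair A τ τ') :
    cofactorLast A τ' = - cofactorLast A τ := by
  have h0 : (lastReplaced A (fun i => (if i = τ then 1 else 0) + (if i = τ' then 1 else 0))).det
      = 0 := by
    refine Matrix.det_zero_of_row_eq h ?_
    ext j
    simp [lastReplaced, walkMatrix_twin htw, h, h.symm]
  rw [det_lastReplaced] at h0
  simp only [add_mul, ite_mul, one_mul, zero_mul, Finset.sum_add_distrib, Finset.sum_ite_eq',
    Finset.mem_univ, if_true] at h0
  linarith

lemma det_hatW {A : Matrix (Fin (n + 2)) (Fin (n + 2)) ℤ} {τ τ' : Fin (n + 2)}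
    (h : τ ≠ τ') (htw : IsTwinPair A τ τ') :
    (hatW A τ τ').det = -2 * cofactorLast A τ := by
  have h1 : hatW A τ τ' = lastReplaced A (alphaVec τ τ') := rfl
  have h2 := sum_alphaVec_mul h (fun i => cofactorLast A i)
  simp only [Int.cast_id] at h2
  rw [h1, det_lastReplaced, h2, cofactor_twin h htw]
  ring

/-- If an integer matrix has corank at least two modulo `p`, witnessed by two left kernel vectors
in echelon position, then `p ^ 2` divides its determinant: replacing the rows `i` and `j` by the
lifted combinations multiplies the determinant by units modulo `p` and makes both rows
divisible by `p`. -/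
lemma sq_dvd_det {m : ℕ} {p : ℕ} (hp : p.Prime) (M : Matrix (Fin m) (Fin m) ℤ)
    (u v : Fin m → ZMod p)
    (hu : (M.map ((↑) : ℤ → ZMod p))ᵀ *ᵥ u = 0)
    (hv : (M.map ((↑) : ℤ → ZMod p))ᵀ *ᵥ v = 0)
    {i j : Fin m} (hui : u i ≠ 0) (hvi : v i = 0) (hvj : v j ≠ 0) :
    (p : ℤ) ^ 2 ∣ M.det := by
  have : Fact p.Prime := ⟨hp⟩
  have hij : i ≠ j := by rintro rfl; exact hvj hvi
  obtain ⟨lift, hlift, hlift0⟩ : ∃ f : ZMod p → ℤ, (∀ a, ((f a : ℤ) : ZMod p) = a) ∧ f 0 = 0 :=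
    ⟨fun a => (a.val : ℤ), fun a => by simp, by simp⟩
  -- The coefficientwise lift of a left kernel vector combines the rows into a multiple of `p`.
  have key : ∀ w : Fin m → ZMod p, (M.map ((↑) : ℤ → ZMod p))ᵀ *ᵥ w = 0 →
      ∃ r : Fin m → ℤ, ∑ k, lift (w k) • M k = (p : ℤ) • r := by
    intro w hw
    have h : ∀ c, ∃ d : ℤ, ∑ k, lift (w k) * M k c = p * d := by
      intro c
      have h1 : (p : ℤ) ∣ ∑ k, lift (w k) * M k c := by
        rw [← ZMod.intCast_zmod_eq_zero_iff_dvd]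
        have h2 := congrFun hw c
        simp only [Matrix.mulVec, dotProduct, Matrix.transpose_apply, Matrix.map_apply,
          Pi.zero_apply] at h2
        push_cast
        rw [← h2]
        exact Finset.sum_congr rfl fun k _ => by rw [hlift, mul_comm]
      exact h1
    choose r hr using h
    refine ⟨r, ?_⟩
    ext c
    simp [Finset.sum_apply, hr]
  obtain ⟨r, hr⟩ := key u hu
  obtain ⟨s, hs⟩ := key v hv
  have h1 := Matrix.det_updateRow_sum M i (fun k => lift (u k))
  have h2 := Matrix.det_updateRow_sum (M.updateRow i (∑ k, lift (u k) • M k)) j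
    (fun k => lift (v k))
  -- Row `i` has coefficient zero in the second combination, so the first replacement is invisible.
  have h3 : ∑ k, lift (v k) • (M.updateRow i (∑ k, lift (u k) • M k)) k
      = ∑ k, lift (v k) • M k := by
    refine Finset.sum_congr rfl fun k _ => ?_
    by_cases hk : k = i
    · subst hk; simp [hvi, hlift0]
    · rw [Matrix.updateRow_ne hk]
  rw [h3, h1, hr, hs, Matrix.det_updateRow_smul, Matrix.updateRow_comm _ hij,
    Matrix.det_updateRow_smul] at h2
  have hnd : ∀ a : ZMod p, a ≠ 0 → IsCoprime ((p : ℤ) ^ 2) (lift a) := by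
    intro a ha
    refine IsCoprime.pow_left ?_
    rw [Prime.coprime_iff_not_dvd (Nat.prime_iff_prime_int.mp hp),
      ← ZMod.intCast_zmod_eq_zero_iff_dvd, hlift]
    exact ha
  refine (hnd _ hui).dvd_of_dvd_mul_left ((hnd _ hvj).dvd_of_dvd_mul_left ?_)
  simp only [smul_eq_mul] at h2
  rw [← h2, ← mul_assoc, ← sq]
  exact dvd_mul_right _ _

/-- `α` is an eigenvector of `A` for `λ₁`. -/
lemma mulVec_alpha {A : Matrix (Fin (n + 2)) (Fin (n + 2)) ℤ} (hA : A.IsAdjMatrix)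
    {τ τ' : Fin (n + 2)} (h : τ ≠ τ') (htw : IsTwinPair A τ τ') (p : ℕ) :
    (A.map ((↑) : ℤ → ZMod p)) *ᵥ alphaVecMod p τ τ'
      = (lam1 A τ τ' : ZMod p) • alphaVecMod p τ τ' := by
  ext i
  have h1 := sum_alphaVec_mul h (fun k => ((A i k : ℤ) : ZMod p))
  simp only [Matrix.mulVec, dotProduct, Matrix.map_apply, Pi.smul_apply, smul_eq_mul]
  simp only [alphaVecMod]
  rw [Finset.sum_congr rfl fun k _ => mul_comm _ _, h1]
  have hd : ∀ k, A k k = 0 := hA.apply_diag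
  have hs := hA.symm.apply τ τ'
  by_cases h2 : i = τ
  · subst h2; simp [alphaVec, lam1, hd]
  · by_cases h3 : i = τ'
    · subst h3; simp [alphaVec, lam1, hd, hs, h.symm]
    · have h4 := htw i τ
      rw [Equiv.swap_apply_of_ne_of_ne h2 h3, Equiv.swap_apply_left] at h4
      simp [alphaVec, h2, h3, h4]

/-- the no-common-eigenvector condition holds iff `λ₀ ≠ λ₁` in `𝔽_p`. -/
theorem condition_iff_lam0_ne_lam1
    (n : ℕ) (A : Matrix (Fin (n + 2)) (Fin (n + 2)) ℤ)
    (hA : A.IsAdjMatrix) (hac : IsAlmostControllable A)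
    (τ τ' : Fin (n + 2)) (hlt : τ < τ') (htw : IsTwinPair A τ τ')
    (b : ℤ) (hodd : Odd b) (hsf : Squarefree b) (hpos : 0 < b)
    (hcof : cofactorLast A τ = 2 ^ ((n + 2) / 2 - 1) * b ∨
            cofactorLast A τ = -(2 ^ ((n + 2) / 2 - 1) * b))
    (p : ℕ) (hp : p.Prime) (hp2 : p ≠ 2) (hdvd : (p : ℤ) ∣ b)
    (β : Fin (n + 2) → ZMod p) (hβ : β ≠ 0)
    (hβW : ((hatW A τ τ').map ((↑) : ℤ → ZMod p))ᵀ *ᵥ β = 0)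
    (lam0 : ZMod p) (hlam0 : (A.map ((↑) : ℤ → ZMod p)) *ᵥ β = lam0 • β) :
    (∃ x : Fin (n + 2) → ZMod p,
      ((walkMatrix A).map ((↑) : ℤ → ZMod p))ᵀ *ᵥ x = 0 ∧
      (A.map ((↑) : ℤ → ZMod p) -
        ((lam1 A τ τ' : ZMod p)) •
          (1 : Matrix (Fin (n + 2)) (Fin (n + 2)) (ZMod p))) *ᵥ x ≠ 0) ↔
    lam0 ≠ (lam1 A τ τ' : ZMod p) := by
  have : Fact p.Prime := ⟨hp⟩
  have hne : τ ≠ τ' := hlt.ne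
  have hpZ : Prime (p : ℤ) := Nat.prime_iff_prime_int.mp hp
  have hp2Z : IsCoprime ((p : ℤ) ^ 2) 2 := by
    refine IsCoprime.pow_left ?_
    exact_mod_cast Nat.isCoprime_iff_coprime.mpr ((Nat.coprime_primes hp Nat.prime_two).mpr hp2)
  have h2 : (2 : ZMod p) ≠ 0 := by
    intro h
    have h' : ((2 : ℕ) : ZMod p) = 0 := by exact_mod_cast h
    rw [ZMod.natCast_eq_zero_iff] at h'
    exact hp2 ((Nat.prime_dvd_prime_iff_eq hp Nat.prime_two).mp h')
  have hdet : ¬ (p : ℤ) ^ 2 ∣ (hatW A τ τ').det := by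
    intro h
    rw [det_hatW hne htw, neg_mul, dvd_neg] at h
    have h' := hp2Z.dvd_of_dvd_mul_left h
    have h'' : (p : ℤ) ^ 2 ∣ 2 ^ ((n + 2) / 2 - 1) * b := by
      rcases hcof with hc | hc <;> rw [hc] at h'
      · exact h'
      · exact (dvd_neg).mp h'
    have h3 := (hp2Z.pow_right).dvd_of_dvd_mul_left h''
    rw [sq] at h3
    exact hpZ.not_isUnit (hsf _ h3)
  have hhat : ∀ x : Fin (n + 2) → ZMod p, ∀ j : Fin (n + 2),
      (((hatW A τ τ').map ((↑) : ℤ → ZMod p))ᵀ *ᵥ x) j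
        = if (j : ℕ) = n + 1 then x τ' - x τ
          else (((walkMatrix A).map ((↑) : ℤ → ZMod p))ᵀ *ᵥ x) j := by
    intro x j
    split_ifs with hj
    · rw [← sum_alphaVec_mul hne x]
      simp [Matrix.mulVec, dotProduct, hatW, hj]
    · simp [Matrix.mulVec, dotProduct, hatW, hj]
  have hsymm : (A.map ((↑) : ℤ → ZMod p))ᵀ = A.map ((↑) : ℤ → ZMod p) := by
    ext i j
    simp [hA.symm.apply]
  constructor
  · rintro ⟨x, hxW, hx⟩ rfl
    apply hx
    have hα := mulVec_alpha hA hne htw p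
    set B := A.map ((↑) : ℤ → ZMod p) with hB
    set l := (lam1 A τ τ' : ZMod p)
    set α := alphaVecMod p τ τ' with hαdef
    have hατ : α τ = -1 := by simp [hαdef, alphaVecMod, alphaVec]
    have hατ' : α τ' = 1 := by simp [hαdef, alphaVecMod, alphaVec, hne.symm]
    have hαW : ((walkMatrix A).map ((↑) : ℤ → ZMod p))ᵀ *ᵥ α = 0 := by
      ext j
      have h1 := sum_alphaVec_mul hne (fun k => ((walkMatrix A k j : ℤ) : ZMod p))
      rw [walkMatrix_twin htw, sub_self] at h1
      rw [Pi.zero_apply, ← h1]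
      simp [Matrix.mulVec, dotProduct, hαdef, alphaVecMod, mul_comm]
    -- Twice the projection of `x` to the orthogonal complement of `α` (note `α ⬝ᵥ α = 2`).
    set y := (2 : ZMod p) • x - (x τ' - x τ) • α with hy
    have hyW : ((hatW A τ τ').map ((↑) : ℤ → ZMod p))ᵀ *ᵥ y = 0 := by
      ext j
      rw [hhat]
      split_ifs with hj
      · simp [hy, hατ, hατ']; ring
      · rw [hy, Matrix.mulVec_sub, Matrix.mulVec_smul, Matrix.mulVec_smul, hxW, hαW]; simp
    obtain ⟨i, hi⟩ := Function.ne_iff.mp hβ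
    rw [Pi.zero_apply] at hi
    have hz : β i • y - y i • β = 0 := by
      by_contra hz
      obtain ⟨j, hj⟩ := Function.ne_iff.mp hz
      refine hdet (sq_dvd_det hp _ β _ hβW ?_ hi ?_ hj)
      · rw [Matrix.mulVec_sub, Matrix.mulVec_smul, Matrix.mulVec_smul, hyW, hβW]; simp
      · simp [mul_comm]
    have hker : ∀ w, B *ᵥ w = l • w → (B - l • (1 : Matrix _ _ (ZMod p))) *ᵥ w = 0 := by
      intro w hw
      rw [Matrix.sub_mulVec, Matrix.smul_mulVec, Matrix.one_mulVec, hw, sub_self]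
    have hy0 : (B - l • (1 : Matrix _ _ (ZMod p))) *ᵥ y = 0 := by
      have h3 := congrArg ((B - l • (1 : Matrix _ _ (ZMod p))) *ᵥ ·) hz
      simp only [Matrix.mulVec_sub _ (β i • y), Matrix.mulVec_smul, hker β hlam0, smul_zero,
        sub_zero, Matrix.mulVec_zero] at h3
      exact (smul_eq_zero.mp h3).resolve_left hi
    rw [hy, Matrix.mulVec_sub, Matrix.mulVec_smul, Matrix.mulVec_smul, hker α hα, smul_zero,
      sub_zero] at hy0
    exact (smul_eq_zero.mp hy0).resolve_left h2
  · intro hl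
    have hcol : ∀ j : Fin (n + 2), (j : ℕ) ≠ n + 1 →
        (((walkMatrix A).map ((↑) : ℤ → ZMod p))ᵀ *ᵥ β) j = 0 := by
      intro j hj
      have h := hhat β j
      rw [hβW, if_neg hj] at h
      exact h.symm
    refine ⟨β, ?_, ?_⟩
    · ext j
      by_cases hj : (j : ℕ) = n + 1
      · -- `⟨A ^ (n + 1) e, β⟩ = ⟨A ^ n e, A β⟩ = λ₀ ⟨A ^ n e, β⟩ = 0`.
        have hn := hcol ⟨n, by omega⟩ (by simp)
        set f : Fin (n + 2) → ZMod p := fun i => (((A ^ n) *ᵥ eVec (n + 2)) i : ℤ) with hf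
        have e1 : (((walkMatrix A).map ((↑) : ℤ → ZMod p))ᵀ *ᵥ β) ⟨n, by omega⟩ = f ⬝ᵥ β := by
          simp [Matrix.mulVec, walkMatrix, dotProduct, hf]
        have e2 : (((walkMatrix A).map ((↑) : ℤ → ZMod p))ᵀ *ᵥ β) j
            = (A.map ((↑) : ℤ → ZMod p) *ᵥ f) ⬝ᵥ β := by
          simp only [Matrix.mulVec, walkMatrix, dotProduct, hf, hj, Matrix.transpose_apply,
            Matrix.map_apply, Matrix.of_apply]
          refine Finset.sum_congr rfl fun i _ => ?_
          congr 1
          have h3 : ((A ^ (n + 1)) *ᵥ eVec (n + 2)) i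
              = ∑ k, A i k * ((A ^ n) *ᵥ eVec (n + 2)) k := by
            rw [pow_succ', ← Matrix.mulVec_mulVec]; rfl
          simp only [Matrix.mulVec, dotProduct] at h3
          rw [h3]
          push_cast
          rfl
        rw [e2, ← hsymm, Matrix.mulVec_transpose, ← Matrix.dotProduct_mulVec, hlam0,
          dotProduct_smul, ← e1, hn, smul_zero, Pi.zero_apply]
      · exact hcol j hj
    · rw [Matrix.sub_mulVec, Matrix.smul_mulVec, Matrix.one_mulVec, hlam0, ← sub_smul]
      exact smul_ne_zero (sub_ne_zero.mpr hl) hβ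

end AlmostControllableGraphs
end

section
/- Let n ≥ 2 and let G be an almost controllable graph on Fin n having a pair of twins τ ≠ τ′, and let Q be a rational regular orthogonal n×n matrix such that Qᵀ·A(G)·Q is the adjacency matrix of some graph (a symmetric 0–1 matrix with zero diagonal). Then det W₀(G) is an integer and the level ℓ(Q) divides det W₀(G). -/
/-!
Write `N = n + 2`, `W = W(G)` and `B = Qᵀ A Q`.

*Transport by `Q`.* Since `Qᵀ e = e`, one has `Qᵀ W(A) = W(B)`. The vector `ξ` is the last row of
the adjugate of the walk matrix, and the adjugate reverses products, so `Qᵀ ξ(A) = ± ξ(B)`, the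
sign being `det Q` (`xiVec_transport`).

*Divisibility.* Every entry of `ξ` is divisible by `2 ^ (⌊N/2⌋ - 1)` (`two_pow_dvd_xiVec`). Indeed
`ξ i = det M`, where `M` is `Wᵀ` with its last row replaced by the `i`-th unit vector. The Gram
matrix `M Mᵀ` has entries `eᵀ A^(a+b) e` away from its last row and column, and these are even
unless `a = b = 0` and `N` is odd. Hence each term of the Leibniz expansion of
`det (M Mᵀ) = (ξ i)²` contains at most two odd factors if `N` is even and at most three if `N` is
odd, which gives `2 ^ (2 (⌊N/2⌋ - 1)) ∣ (ξ i)²`.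

*Conclusion.* Both `W₀(A)` and `Qᵀ W₀(A)` are therefore integral, so `det W₀(A)` is an integer and
`det W₀(A) • Qᵀ = Qᵀ W₀(A) adj (W₀(A))` is integral. Every integer `d` for which `d Q` is
integral is a multiple of the level of `Q` (`level_dvd_of_integral`).
-/

open Matrix

namespace AlmostControllableGraphs

variable {n : ℕ}

/-! ### Parity of walk counts -/

/-- A quadratic form with symmetric zero-diagonal matrix vanishes over `ZMod 2`. -/
lemma quad_eq_zero {ι : Type*} [Fintype ι] [DecidableEq ι] (A : Matrix ι ι (ZMod 2))
    (hs : Aᵀ = A) (hd : ∀ i, A i i = 0) (u : ι → ZMod 2) : u ⬝ᵥ (A *ᵥ u) = 0 := by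
  have h1 : u ⬝ᵥ (A *ᵥ u) = ∑ p : ι × ι, u p.1 * (A p.1 p.2 * u p.2) := by
    simp only [dotProduct, mulVec, Finset.mul_sum, Fintype.sum_prod_type]
  rw [h1]
  refine Finset.sum_involution (fun p _ => (p.2, p.1)) ?_ ?_ ?_ ?_
  · rintro ⟨i, j⟩ _
    have : A j i = A i j := congrFun (congrFun hs i) j
    simp only [this]
    have h2 : (2 : ZMod 2) = 0 := rfl
    linear_combination (u i * A i j * u j) * h2
  · rintro ⟨i, j⟩ _ h h'
    simp only [Prod.mk.injEq] at h'
    obtain ⟨rfl, -⟩ := h'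
    simp [hd] at h
  · simp
  · simp

/-- For a symmetric zero-diagonal matrix over `ZMod 2`, the number of walks of any positive
length is zero: halve even lengths using `x² = x`, and read odd lengths as a quadratic form. -/
lemma walks_eq_zero {ι : Type*} [Fintype ι] [DecidableEq ι] (A : Matrix ι ι (ZMod 2))
    (hs : Aᵀ = A) (hd : ∀ i, A i i = 0) (m : ℕ) (hm : 0 < m) :
    (1 : ι → ZMod 2) ⬝ᵥ ((A ^ m) *ᵥ 1) = 0 := by
  have hps : ∀ k, (A ^ k)ᵀ = A ^ k := fun k => by rw [transpose_pow, hs]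
  have hmove : ∀ k (w : ι → ZMod 2), (1 : ι → ZMod 2) ⬝ᵥ ((A ^ k) *ᵥ w) = ((A ^ k) *ᵥ 1) ⬝ᵥ w := by
    intro k w
    rw [dotProduct_mulVec, ← mulVec_transpose, hps]
  induction m using Nat.strong_induction_on with
  | _ m ih =>
    rcases Nat.even_or_odd' m with ⟨k, rfl | rfl⟩
    · rw [two_mul, pow_add, ← mulVec_mulVec, hmove]
      have hsq : ∀ x : ZMod 2, x * x = x := by decide
      have := ih k (by omega) (by omega)
      rw [← this]
      simp [dotProduct, hsq]
    · rw [show 2 * k + 1 = k + (1 + k) by ring, pow_add, pow_add, pow_one, ← mulVec_mulVec, hmove,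
        ← mulVec_mulVec]
      exact quad_eq_zero A hs hd _

lemma even_gram (A : Matrix (Fin (n + 2)) (Fin (n + 2)) ℤ) (hA : A.IsAdjMatrix)
    (a b : Fin (n + 2)) (hab : 0 < (a : ℕ) + b ∨ Even n) :
    (2 : ℤ) ∣ ∑ k, walkMatrix A k a * walkMatrix A k b := by
  have hcast : ((∑ k, walkMatrix A k a * walkMatrix A k b : ℤ) : ZMod 2) =
      (1 : Fin (n + 2) → ZMod 2) ⬝ᵥ (((A.map (Int.castRingHom (ZMod 2))) ^ ((a : ℕ) + b)) *ᵥ 1) := by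
    have hs : (A.map (Int.castRingHom (ZMod 2)))ᵀ = A.map (Int.castRingHom (ZMod 2)) := by
      rw [← transpose_map, hA.symm]
    have hw : ∀ k j : Fin (n + 2), ((walkMatrix A k j : ℤ) : ZMod 2) =
        (((A.map (Int.castRingHom (ZMod 2))) ^ (j : ℕ)) *ᵥ 1) k := by
      intro k j
      rw [← RingHom.mapMatrix_apply, ← map_pow]
      simp [walkMatrix, mulVec, dotProduct, eVec]
    rw [pow_add, ← mulVec_mulVec, dotProduct_mulVec, ← mulVec_transpose, transpose_pow, hs]
    push_cast
    simp only [hw, dotProduct]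
  have hz : ((∑ k, walkMatrix A k a * walkMatrix A k b : ℤ) : ZMod 2) = 0 := by
    rw [hcast]
    rcases Nat.eq_zero_or_pos ((a : ℕ) + b) with h0 | h0
    · have hn : Even n := hab.resolve_left (by omega)
      rw [h0, pow_zero, one_mulVec]
      have : ((n : ℕ) : ZMod 2) = 0 := (ZMod.natCast_eq_zero_iff_even).2 hn
      simp [dotProduct, this]
      rfl
    · refine walks_eq_zero _ ?_ ?_ _ h0
      · rw [← transpose_map, hA.symm]
      · intro i
        simp [hA.apply_diag i]
  exact (ZMod.intCast_zmod_eq_zero_iff_dvd _ 2).1 hz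

/-! ### Divisibility of the cofactor vector -/

/-- If every entry of an integer matrix outside row `l`, column `l` and (for odd `n` only) column
`z` is even, each Leibniz term has at most two odd factors for even `n` and at most three for odd
`n`. -/
lemma two_pow_dvd_det (S : Matrix (Fin (n + 2)) (Fin (n + 2)) ℤ) (l z : Fin (n + 2))
    (h : ∀ a b, a ≠ l → b ≠ l → (b ≠ z ∨ Even n) → (2 : ℤ) ∣ S a b) :
    (2 : ℤ) ^ (2 * (n / 2)) ∣ S.det := by
  rw [det_apply]
  refine Finset.dvd_sum fun σ _ => ?_
  rw [Units.smul_def, smul_eq_mul]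
  refine Dvd.dvd.mul_left ?_ _
  obtain ⟨T, hT, hTS⟩ : ∃ T : Finset (Fin (n + 2)), 2 * (n / 2) ≤ T.card ∧
      ∀ b ∈ T, (2 : ℤ) ∣ S (σ b) b := by
    have hσ : ∀ b, b ≠ σ.symm l → σ b ≠ l := fun b hb h' => hb (by simp [← h'])
    rcases Nat.even_or_odd n with hn | hn
    · refine ⟨Finset.univ \ {l, σ.symm l}, ?_, ?_⟩
      · have h1 := Finset.le_card_sdiff ({l, σ.symm l} : Finset (Fin (n + 2))) Finset.univ
        have h2 := Finset.card_le_two (a := l) (b := σ.symm l)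
        rw [Finset.card_univ, Fintype.card_fin] at h1
        omega
      · intro b hb
        simp only [Finset.mem_sdiff, Finset.mem_univ, Finset.mem_insert, Finset.mem_singleton,
          true_and, not_or] at hb
        exact h _ _ (hσ b hb.2) hb.1 (Or.inr hn)
    · refine ⟨Finset.univ \ {l, σ.symm l, z}, ?_, ?_⟩
      · have h1 := Finset.le_card_sdiff ({l, σ.symm l, z} : Finset (Fin (n + 2))) Finset.univ
        have h2 := Finset.card_le_three (a := l) (b := σ.symm l) (c := z)
        rw [Finset.card_univ, Fintype.card_fin] at h1
        obtain ⟨k, rfl⟩ := hn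
        omega
      · intro b hb
        simp only [Finset.mem_sdiff, Finset.mem_univ, Finset.mem_insert, Finset.mem_singleton,
          true_and, not_or] at hb
        exact h _ _ (hσ b hb.2.1) hb.1 (Or.inl hb.2.2)
  calc (2 : ℤ) ^ (2 * (n / 2)) ∣ 2 ^ T.card := pow_dvd_pow _ hT
    _ = ∏ b ∈ T, (2 : ℤ) := by simp
    _ ∣ ∏ b ∈ T, S (σ b) b := Finset.prod_dvd_prod_of_dvd _ _ hTS
    _ ∣ ∏ b, S (σ b) b := Finset.prod_dvd_prod_of_subset _ _ _ (Finset.subset_univ _)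

/-- `ξ` is the last row of the adjugate of the walk matrix. -/
lemma xiVec_eq_adjugate (A : Matrix (Fin (n + 2)) (Fin (n + 2)) ℤ) (i : Fin (n + 2)) :
    xiVec A i = (walkMatrix A).adjugate (Fin.last (n + 1)) i := by
  rw [adjugate_fin_succ_eq_det_submatrix]
  simp only [xiVec, cofactorLast, Fin.val_last]
  congr 2
  ext r c
  simp [Xmat, Vmat, Fin.succAbove_last]

lemma two_pow_dvd_xiVec (A : Matrix (Fin (n + 2)) (Fin (n + 2)) ℤ) (hA : A.IsAdjMatrix)
    (i : Fin (n + 2)) : (2 : ℤ) ^ (n / 2) ∣ xiVec A i := by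
  set M := (walkMatrix A)ᵀ.updateRow (Fin.last (n + 1)) (Pi.single i 1) with hM
  have hdet : xiVec A i = M.det := by
    rw [xiVec_eq_adjugate, hM, ← adjugate_apply, ← adjugate_transpose, transpose_apply]
  have hS : (2 : ℤ) ^ (2 * (n / 2)) ∣ (M * Mᵀ).det := by
    refine two_pow_dvd_det _ (Fin.last (n + 1)) 0 fun a b ha hb hz => ?_
    have : (M * Mᵀ) a b = ∑ k, walkMatrix A k a * walkMatrix A k b := by
      simp [mul_apply, hM, updateRow_ne ha, updateRow_ne hb]
    rw [this]
    refine even_gram A hA a b (hz.imp (fun h => ?_) id)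
    have : (b : ℕ) ≠ 0 := fun h' => h (Fin.ext h')
    omega
  rw [det_mul, det_transpose, mul_comm 2, pow_mul, ← sq] at hS
  rw [hdet]
  exact (Int.pow_dvd_pow_iff two_ne_zero).1 hS

/-! ### Transport by a regular orthogonal matrix -/

lemma walkMatrix_map (A : Matrix (Fin (n + 2)) (Fin (n + 2)) ℤ) (i j : Fin (n + 2)) :
    ((walkMatrix A i j : ℤ) : ℚ) = (((A.map ((↑) : ℤ → ℚ)) ^ (j : ℕ)) *ᵥ fun _ => 1) i := by
  have : A.map ((↑) : ℤ → ℚ) = (Int.castRingHom ℚ).mapMatrix A := rfl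
  rw [this, ← map_pow]
  simp [walkMatrix, mulVec, dotProduct, eVec]

lemma walkMatrix_transport (A B : Matrix (Fin (n + 2)) (Fin (n + 2)) ℤ)
    (Q : Matrix (Fin (n + 2)) (Fin (n + 2)) ℚ) (hQ : IsRegularOrthogonal Q)
    (hB : B.map ((↑) : ℤ → ℚ) = Qᵀ * A.map ((↑) : ℤ → ℚ) * Q) :
    Qᵀ * (walkMatrix A).map ((↑) : ℤ → ℚ) = (walkMatrix B).map ((↑) : ℤ → ℚ) := by
  obtain ⟨hQ1, hQe⟩ := hQ
  have hQ2 : Q * Qᵀ = 1 := mul_eq_one_comm.1 hQ1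
  have hpow : ∀ k : ℕ, (B.map ((↑) : ℤ → ℚ)) ^ k = Qᵀ * (A.map ((↑) : ℤ → ℚ)) ^ k * Q := by
    intro k
    induction k with
    | zero => simp [hQ1]
    | succ k ih =>
      rw [pow_succ, ih, hB, pow_succ]
      calc _ = Qᵀ * (A.map ((↑) : ℤ → ℚ)) ^ k * (Q * Qᵀ) * A.map ((↑) : ℤ → ℚ) * Q := by
            simp only [Matrix.mul_assoc]
        _ = _ := by rw [hQ2, Matrix.mul_one]; simp only [Matrix.mul_assoc]
  ext i j
  rw [map_apply, walkMatrix_map, hpow, ← mulVec_mulVec, hQe, ← mulVec_mulVec]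
  simp only [mul_apply, map_apply, walkMatrix_map]
  rfl

/-- The adjugate reverses `W(B) = Qᵀ W(A)`, so `ξ` is transported up to the factor `det Q`. -/
lemma xiVec_transport (A B : Matrix (Fin (n + 2)) (Fin (n + 2)) ℤ)
    (Q : Matrix (Fin (n + 2)) (Fin (n + 2)) ℚ) (hQ : IsRegularOrthogonal Q)
    (hB : B.map ((↑) : ℤ → ℚ) = Qᵀ * A.map ((↑) : ℤ → ℚ) * Q) (i : Fin (n + 2)) :
    ∑ k, Qᵀ i k * (xiVec A k : ℚ) = Q.det * (xiVec B i : ℚ) := by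
  have hQ2 : Q * Qᵀ = 1 := mul_eq_one_comm.1 hQ.1
  have hmap : ∀ C : Matrix (Fin (n + 2)) (Fin (n + 2)) ℤ, ∀ k, (xiVec C k : ℚ) =
      ((walkMatrix C).map ((↑) : ℤ → ℚ)).adjugate (Fin.last (n + 1)) k := by
    intro C k
    rw [xiVec_eq_adjugate]
    exact congrFun (congrFun ((Int.castRingHom ℚ).map_adjugate (walkMatrix C)) _) _
  have hadjQ : Q.det • (Qᵀ).adjugate = Q := by
    have h1 : Qᵀ * (Qᵀ).adjugate = Q.det • 1 := by rw [mul_adjugate, det_transpose]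
    have h2 : Q.det * Q.det = 1 := by
      have := congrArg det hQ.1
      rwa [det_mul, det_transpose, det_one] at this
    calc Q.det • (Qᵀ).adjugate = Q.det • (Q * (Qᵀ * (Qᵀ).adjugate)) := by
          rw [← Matrix.mul_assoc, hQ2, Matrix.one_mul]
      _ = Q := by rw [h1, Matrix.mul_smul, smul_smul, h2, Matrix.mul_one, one_smul]
  have hW : Q.det • ((walkMatrix B).map ((↑) : ℤ → ℚ)).adjugate =
      ((walkMatrix A).map ((↑) : ℤ → ℚ)).adjugate * Q := by
    rw [← walkMatrix_transport A B Q hQ hB, adjugate_mul_distrib, ← Matrix.mul_smul, hadjQ]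
  have := congrFun (congrFun hW (Fin.last (n + 1))) i
  rw [Matrix.smul_apply, smul_eq_mul, mul_apply] at this
  rw [hmap B, this]
  exact Finset.sum_congr rfl fun k _ => by rw [hmap A, transpose_apply, mul_comm]

/-! ### The level -/

lemma level_dvd_of_integral {m : ℕ} (Q : Matrix (Fin m) (Fin m) ℚ) (d : ℤ)
    (h : ∀ i j, ∃ z : ℤ, (d : ℚ) * Q i j = z) : (level Q : ℤ) ∣ d := by
  rcases eq_or_ne d 0 with rfl | hd
  · exact dvd_zero _
  have hden : ∀ q : ℚ, q.den = 1 ↔ ∃ z : ℤ, q = z := fun q =>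
    ⟨fun hq => ⟨q.num, (Rat.den_eq_one_iff q).1 hq |>.symm⟩, by rintro ⟨z, rfl⟩; simp⟩
  have hne : {k : ℕ | 0 < k ∧ ∀ i j, ((k : ℚ) * Q i j).den = 1}.Nonempty := by
    refine ⟨d.natAbs, Int.natAbs_pos.2 hd, fun i j => (hden _).2 ?_⟩
    obtain ⟨z, hz⟩ := h i j
    rcases Int.natAbs_eq d with h' | h'
    · exact ⟨z, by rw [← hz, ← Int.cast_natCast, ← h']⟩
    · refine ⟨-z, ?_⟩
      rw [Int.cast_neg, ← hz, ← neg_mul, ← Int.cast_neg, ← Int.cast_natCast (d.natAbs)]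
      congr 2
      omega
  obtain ⟨hpos, hlev⟩ := Nat.sInf_mem hne
  change 0 < level Q at hpos
  change ∀ i j, ((level Q : ℚ) * Q i j).den = 1 at hlev
  have hpos' : (0 : ℤ) < level Q := by exact_mod_cast hpos
  -- The remainder of `d` modulo the level also clears denominators, so minimality makes it `0`.
  refine Int.dvd_of_emod_eq_zero ?_
  by_contra hr
  have hr0 := Int.emod_nonneg d hpos'.ne'
  have hr1 := Int.emod_lt_of_pos d hpos'
  have hcast : (((d % level Q).toNat : ℕ) : ℤ) = d % level Q := Int.toNat_of_nonneg hr0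
  have hmem : (d % level Q).toNat ∈ {k : ℕ | 0 < k ∧ ∀ i j, ((k : ℚ) * Q i j).den = 1} := by
    refine ⟨by omega, fun i j => (hden _).2 ?_⟩
    obtain ⟨z, hz⟩ := h i j
    obtain ⟨y, hy⟩ := (hden _).1 (hlev i j)
    refine ⟨z - d / level Q * y, ?_⟩
    rw [← Int.cast_natCast, hcast, Int.emod_def]
    push_cast
    rw [← hz, ← hy]
    ring
  have hle : level Q ≤ (d % level Q).toNat := Nat.sInf_le hmem
  omega

/-- `det W₀(G)` is an integer and the level of any `Q ∈ 𝒬_G` divides it. -/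
theorem level_dvd_det_W0
    (n : ℕ) (A : Matrix (Fin (n + 2)) (Fin (n + 2)) ℤ)
    (hA : A.IsAdjMatrix) (hac : IsAlmostControllable A)
    (τ τ' : Fin (n + 2)) (hne : τ ≠ τ') (htw : IsTwinPair A τ τ')
    (Q : Matrix (Fin (n + 2)) (Fin (n + 2)) ℚ) (hQ : IsRegularOrthogonal Q)
    (hadj : (Qᵀ * A.map ((↑) : ℤ → ℚ) * Q).IsAdjMatrix) :
    ∃ d : ℤ, (Wdelta A 0).det = (d : ℚ) ∧ (level Q : ℤ) ∣ d := by
  set P := Qᵀ * A.map ((↑) : ℤ → ℚ) * Q with hP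
  obtain ⟨B, hBadj, hB⟩ : ∃ B : Matrix (Fin (n + 2)) (Fin (n + 2)) ℤ, B.IsAdjMatrix ∧
      B.map ((↑) : ℤ → ℚ) = P := by
    have hmap : (Matrix.of fun i j => if P i j = 1 then (1 : ℤ) else 0).map ((↑) : ℤ → ℚ) = P := by
      ext i j
      rcases hadj.zero_or_one i j with h | h <;> simp [h]
    refine ⟨Matrix.of fun i j => if P i j = 1 then 1 else 0, ⟨?_, ?_, ?_⟩, hmap⟩
    · intro i j
      by_cases h : P i j = 1 <;> simp [h]
    · ext i j
      simp [hadj.symm.apply i j]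
    · intro i
      simp [hadj.apply_diag i]
  choose ζA hζA using two_pow_dvd_xiVec A hA
  choose ζB hζB using two_pow_dvd_xiVec B hBadj
  have htwo : twoPow n * 2 ^ (n / 2) = 1 := by
    have : (1 : ℤ) - (((n + 2) / 2 : ℕ) : ℤ) = -((n / 2 : ℕ) : ℤ) := by omega
    rw [twoPow, this, _root_.zpow_neg, zpow_natCast]
    exact inv_mul_cancel₀ (by positivity)
  -- `W₀(A)` is integral.
  obtain ⟨Z, hZ⟩ : ∃ Z : Matrix (Fin (n + 2)) (Fin (n + 2)) ℤ,
      Wdelta A 0 = (Int.castRingHom ℚ).mapMatrix Z := by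
    refine ⟨Matrix.of fun i j => if (j : ℕ) = n + 1 then ζA i else walkMatrix A i j, ?_⟩
    ext i j
    by_cases hj : (j : ℕ) = n + 1
    · simp [Wdelta, hj, hζA, ← mul_assoc, htwo]
    · simp [Wdelta, hj]
  have hdetQ : Q.det = 1 ∨ Q.det = -1 := by
    have := congrArg det hQ.1
    rw [det_mul, det_transpose, det_one] at this
    exact mul_self_eq_one_iff.1 this
  obtain ⟨s, hs⟩ : ∃ s : ℤ, Q.det = s := by
    rcases hdetQ with h | h
    · exact ⟨1, by simp [h]⟩
    · exact ⟨-1, by simp [h]⟩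
  -- `Qᵀ W₀(A)` is integral: up to the sign of its last column it is `W₀(B)`.
  obtain ⟨Y, hY⟩ : ∃ Y : Matrix (Fin (n + 2)) (Fin (n + 2)) ℤ,
      Qᵀ * Wdelta A 0 = (Int.castRingHom ℚ).mapMatrix Y := by
    refine ⟨Matrix.of fun i j => if (j : ℕ) = n + 1 then s * ζB i else walkMatrix B i j, ?_⟩
    ext i j
    by_cases hj : (j : ℕ) = n + 1
    · have h1 := xiVec_transport A B Q hQ hB i
      have h2 : (Qᵀ * Wdelta A 0) i j = twoPow n * ∑ k, Qᵀ i k * (xiVec A k : ℚ) := by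
        rw [mul_apply, Finset.mul_sum]
        refine Finset.sum_congr rfl fun k _ => ?_
        simp only [Wdelta, of_apply, hj, if_true, pow_zero]
        ring
      rw [h2, h1, hs, hζB]
      simp only [RingHom.mapMatrix_apply, map_apply, of_apply, hj, if_true, eq_intCast]
      push_cast
      linear_combination (s : ℚ) * ζB i * htwo
    · have h1 := congrFun (congrFun (walkMatrix_transport A B Q hQ hB) i) j
      rw [mul_apply] at h1 ⊢
      simpa [Wdelta, hj] using h1
  refine ⟨Z.det, by rw [hZ, ← RingHom.map_det]; rfl, level_dvd_of_integral Q _ fun i j => ?_⟩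
  have hfin : (Z.det : ℚ) • Qᵀ = (Int.castRingHom ℚ).mapMatrix (Y * Z.adjugate) := by
    rw [map_mul, ← hY, Matrix.mul_assoc, RingHom.map_adjugate, ← hZ, mul_adjugate, hZ,
      ← RingHom.map_det, Matrix.mul_smul, Matrix.mul_one]
    rfl
  have := congrFun (congrFun hfin j) i
  exact ⟨(Y * Z.adjugate) j i, by simpa using this⟩

end AlmostControllableGraphs
end

section
/- Let n ≥ 2 and let G be an almost controllable graph on Fin n with twins τ < τ′ such that the (τ,n)-cofactor of W(G) equals ±2^{⌊n/2⌋−1}·b for an odd, square-free, positive integer b. Let p be an odd prime dividing b such that there exists a vector x ∈ 𝔽_pⁿ with W(G)ᵀx = 0 and (A(G) − λ₁(G)·I)x ≠ 0 over 𝔽_p. Then for every rational regular orthogonal n×n matrix Q such that Qᵀ·A(G)·Q is the adjacency matrix of some graph (a symmetric 0–1 matrix with zero diagonal), p does not divide the level ℓ(Q). -/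
/-!
Put `α = e_τ' - e_τ` and `d = det [e, Ae, …, Aⁿe, α]`, where the matrices have size `n + 2`. Since the
rows `τ` and `τ'` of the walk matrix agree, `d` is `-2` times the given cofactor, so `p` divides `d`
exactly once; write `d = p m`. Let `B = QᵀAQ`. Cramer's rule shows that `U = dQ` is an integer matrix
(`exists_int_smul`). It suffices to show that `p` divides `U`: then `mQ` is integral, the level of `Q`
divides `m`, and `p` does not divide `m`.

Modulo `p` the columns of `U` are orthogonal to all `Aᵏe`, isotropic, and satisfy `uᵀAu = 0`. The
vector `x` produces a second vector `y`, orthogonal to `α`, in the left kernel of the walk matrix; it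
is an eigenvector for an eigenvalue `μ` other than that of `α`. Since `p` is odd, isotropy forces
`U ≡ y wᵀ`, and then `w` is an eigenvector of `B` for the same `μ` or zero (`col_space`).

In particular `p` divides `Uᵀα`, and `r = Uᵀα / p` plays for `B` the role that `α` plays for `A`:
`det [e, …, Bⁿe, r] = ± m d` is again divisible by `p` exactly once. So modulo `p` the vector `e` has
monic annihilating polynomials `a` for `A` and `b` for `B`, both of degree `n` and unique in that
degree (`exists_minpoly`). Lifting the relation `a(A)e ≡ 0` to an integer identity with right-hand
side `p h` and applying `Uᵀ` gives `m a(B)e ≡ (y · h) w` (`transfer`), and symmetrically `b(A)e` is a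
multiple of `y`. As `y` and `w` belong to the same eigenvalue, `a = b` (`minpoly_eq`). Hence
`a(B)e ≡ 0`, while `y · h ≢ 0` because `p² ∤ d` (`dot_ne_zero`). Therefore `w = 0` and `U ≡ 0`.
-/

open Matrix

namespace AlmostControllableGraphs

variable {n : ℕ}

/-! ### Integer matrices whose determinant is divisible by a prime at most once -/

/-- Cramer's rule for `M c = q h`, without division. -/
theorem mul_det_eq_of_mulVec {k : ℕ} {R : Type*} [CommRing R] (M : Matrix (Fin k) (Fin k) R)
    (c h : Fin k → R) (q : R) (hc : M *ᵥ c = q • h) (j : Fin k) :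
    c j * M.det = q * (M.updateCol j h).det := by
  have h1 : M.cramer (M *ᵥ c) = M.det • c := by
    rw [cramer_eq_adjugate_mulVec, mulVec_mulVec, adjugate_mul, smul_mulVec, one_mulVec]
  rw [hc, map_smul] at h1
  have := congrFun h1 j
  simp only [Pi.smul_apply, cramer_apply, smul_eq_mul] at this
  rw [this, mul_comm]

theorem exists_lift {k p : ℕ} (c : Fin k → ZMod p) :
    ∃ c' : Fin k → ℤ, ∀ i, (c' i : ZMod p) = c i :=
  ⟨fun i => (ZMod.intCast_surjective (c i)).choose,
    fun i => (ZMod.intCast_surjective (c i)).choose_spec⟩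

/-- Reduction modulo `p` of an integer matrix. -/
abbrev red (p : ℕ) {k l : ℕ} (M : Matrix (Fin k) (Fin l) ℤ) : Matrix (Fin k) (Fin l) (ZMod p) :=
  M.map (Int.castRingHom (ZMod p))

/-- Reduction modulo `p` of an integer vector. -/
abbrev redV (p : ℕ) {k : ℕ} (v : Fin k → ℤ) : Fin k → ZMod p :=
  Int.castRingHom (ZMod p) ∘ v

theorem redV_eq_zero {p k : ℕ} {v : Fin k → ℤ} (hv : redV p v = 0) :
    ∃ h : Fin k → ℤ, v = (p : ℤ) • h := by
  have : ∀ i, (p : ℤ) ∣ v i := fun i => by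
    have := congrFun hv i
    rwa [← ZMod.intCast_zmod_eq_zero_iff_dvd]
  choose h hh using this
  exact ⟨h, funext hh⟩

theorem red_mulVec {p k l : ℕ} (M : Matrix (Fin k) (Fin l) ℤ) (v : Fin l → ℤ) :
    redV p (M *ᵥ v) = red p M *ᵥ redV p v := by
  ext i; exact RingHom.map_mulVec _ M v i

/-- If `p` divides `det M` at most once and `M c ≡ 0 (mod p)`, say `M c = p h`, then replacing a
column `j` with `c j ≢ 0` by `h` gives a matrix that is invertible modulo `p`. -/
theorem det_updateCol_ne_zero {k p : ℕ} [Fact p.Prime] (M : Matrix (Fin k) (Fin k) ℤ)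
    (hM : ¬ (p : ℤ) ^ 2 ∣ M.det) (c h : Fin k → ℤ) (hc : M *ᵥ c = (p : ℤ) • h) (j : Fin k)
    (hj : redV p c j ≠ 0) : ((red p M).updateCol j (redV p h)).det ≠ 0 := by
  intro h0
  have hp : Prime (p : ℤ) := Nat.prime_iff_prime_int.mp Fact.out
  have h1 := mul_det_eq_of_mulVec M c h p hc j
  have h2 : (p : ℤ) ∣ (M.updateCol j h).det := by
    rw [← ZMod.intCast_zmod_eq_zero_iff_dvd, ← h0]
    refine (RingHom.map_det (Int.castRingHom (ZMod p)) _).trans ?_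
    congr 1
    ext a b
    by_cases hb : b = j <;> simp [hb]
  have h3 : (p : ℤ) ^ 2 ∣ c j * M.det := by
    rw [h1, pow_two]; exact mul_dvd_mul_left _ h2
  refine hM (hp.pow_dvd_of_dvd_mul_left 2 ?_ h3)
  rw [← ZMod.intCast_zmod_eq_zero_iff_dvd]
  exact hj

/-- If `p² ∤ det M`, the kernel of `M` modulo `p` has dimension at most one. -/
theorem ker_simple {k p : ℕ} [Fact p.Prime] (M : Matrix (Fin k) (Fin k) ℤ)
    (hM : ¬ (p : ℤ) ^ 2 ∣ M.det) (c c' : Fin k → ZMod p) (hc : red p M *ᵥ c = 0) (hc0 : c ≠ 0)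
    (hc' : red p M *ᵥ c' = 0) : ∃ t : ZMod p, c' = t • c := by
  obtain ⟨j, hj⟩ := Function.ne_iff.mp hc0
  obtain ⟨C, hC⟩ := exists_lift c
  have hC : redV p C = c := funext hC
  obtain ⟨h, hh⟩ := redV_eq_zero (p := p) (v := M *ᵥ C) (by rw [red_mulVec, hC, hc])
  have hdet := det_updateCol_ne_zero M hM C h hh j (by rw [hC]; exact hj)
  refine ⟨c' j / c j, ?_⟩
  set t := c' j / c j
  have hv : ((red p M).updateCol j (redV p h)) *ᵥ (c' - t • c) = red p M *ᵥ (c' - t • c) := by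
    ext i
    simp only [mulVec, dotProduct]
    refine Finset.sum_congr rfl fun b _ => ?_
    by_cases hb : b = j
    · subst hb
      have : (c' - t • c) b = 0 := by
        have hj' : c b ≠ 0 := hj
        simp [t, hj']
      rw [this]; simp
    · rw [updateCol_ne hb]
  rw [mulVec_sub (red p M), mulVec_smul (red p M), hc, hc', smul_zero, sub_zero] at hv
  by_contra hne
  exact hdet (exists_mulVec_eq_zero_iff.mp ⟨_, sub_ne_zero.mpr hne, hv⟩)

/-- If `p² ∤ det M` and `M c = p h` with `c ≢ 0`, then `h` lies outside the column space of `M`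
modulo `p`: it pairs nontrivially with every nonzero left null vector `y`. -/
theorem dot_ne_zero {k p : ℕ} [Fact p.Prime] (M : Matrix (Fin k) (Fin k) ℤ)
    (hM : ¬ (p : ℤ) ^ 2 ∣ M.det) (c h : Fin k → ℤ) (hc : M *ᵥ c = (p : ℤ) • h)
    (hc0 : redV p c ≠ 0) (y : Fin k → ZMod p) (hy0 : y ≠ 0) (hy : y ᵥ* red p M = 0) :
    y ⬝ᵥ redV p h ≠ 0 := by
  obtain ⟨j, hj⟩ := Function.ne_iff.mp hc0
  have hdet := det_updateCol_ne_zero M hM c h hc j hj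
  intro h0
  refine hdet (exists_vecMul_eq_zero_iff.mp ⟨y, hy0, ?_⟩)
  ext b
  by_cases hb : b = j
  · subst hb
    simpa [vecMul, dotProduct] using h0
  · have := congrFun hy b
    simpa [vecMul, dotProduct, updateCol_apply, hb] using this

/-! ### The matrix with columns `e, Ae, …, Aⁿe, z` -/

/-- The matrix with columns `e, Ae, …, A^n e, z`. -/
def kry {R : Type*} [CommRing R] (A : Matrix (Fin (n + 2)) (Fin (n + 2)) R) (z : Fin (n + 2) → R) :
    Matrix (Fin (n + 2)) (Fin (n + 2)) R :=
  Matrix.of fun i j => if (j : ℕ) = n + 1 then z i else (A ^ (j : ℕ) *ᵥ 1) i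

theorem pow_map_mulVec_one {R S : Type*} [CommRing R] [CommRing S] (f : R →+* S)
    (A : Matrix (Fin (n + 2)) (Fin (n + 2)) R) (k : ℕ) (i) :
    f ((A ^ k *ᵥ 1) i) = ((A.map f) ^ k *ᵥ 1) i := by
  rw [RingHom.map_mulVec]
  have h1 : f ∘ (1 : Fin (n + 2) → R) = 1 := by ext; simp
  have h2 := map_pow f.mapMatrix A k
  simp only [RingHom.mapMatrix_apply] at h2
  rw [h1, h2]

theorem kry_map {R S : Type*} [CommRing R] [CommRing S] (f : R →+* S)
    (A : Matrix (Fin (n + 2)) (Fin (n + 2)) R) (z : Fin (n + 2) → R) :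
    (kry A z).map f = kry (A.map f) (f ∘ z) := by
  ext i j
  simp only [kry, map_apply, of_apply]
  split_ifs
  · rfl
  · exact pow_map_mulVec_one f A j i

theorem pow_mulVec_one_conj {R : Type*} [CommRing R] {P A B : Matrix (Fin (n + 2)) (Fin (n + 2)) R}
    (h : P * A = B * P) (h1 : P *ᵥ 1 = 1) (k : ℕ) : P *ᵥ (A ^ k *ᵥ 1) = B ^ k *ᵥ 1 := by
  have h2 : P * A ^ k = B ^ k * P := SemiconjBy.pow_right (a := P) h k
  rw [mulVec_mulVec, h2, ← mulVec_mulVec, h1]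

theorem mul_kry {R : Type*} [CommRing R] {P A B : Matrix (Fin (n + 2)) (Fin (n + 2)) R}
    (h : P * A = B * P) (h1 : P *ᵥ 1 = 1) (z : Fin (n + 2) → R) :
    P * kry A z = kry B (P *ᵥ z) := by
  ext i j
  by_cases hj : (j : ℕ) = n + 1
  · simp [kry, mul_apply, hj, mulVec, dotProduct]
  · rw [mul_apply]
    simp only [kry, of_apply, hj, if_false]
    exact congrFun (pow_mulVec_one_conj h h1 j) i

theorem updateCol_kry {R : Type*} [CommRing R] (A : Matrix (Fin (n + 2)) (Fin (n + 2)) R)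
    (z z' : Fin (n + 2) → R) : (kry A z).updateCol (Fin.last (n + 1)) z' = kry A z' := by
  ext i j
  by_cases hj : j = Fin.last (n + 1)
  · simp [kry, hj]
  · have : (j : ℕ) ≠ n + 1 := fun h => hj (Fin.ext h)
    simp [kry, hj, this]

/-- Cofactor expansion of `kry A z` along its last column. -/
theorem det_kry {R : Type*} [CommRing R] (A : Matrix (Fin (n + 2)) (Fin (n + 2)) R)
    (z z' : Fin (n + 2) → R) :
    (kry A z).det = ∑ i, (kry A z').adjugate (Fin.last (n + 1)) i * z i := by
  rw [← updateCol_kry A z' z, ← cramer_apply, cramer_eq_adjugate_mulVec]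
  rfl

theorem det_kry_smul {R : Type*} [CommRing R] (A : Matrix (Fin (n + 2)) (Fin (n + 2)) R)
    (z : Fin (n + 2) → R) (m : R) : (kry A (m • z)).det = m * (kry A z).det := by
  rw [det_kry A (m • z) 0, det_kry A z 0, Finset.mul_sum]
  refine Finset.sum_congr rfl fun i _ => ?_
  simp only [Pi.smul_apply, smul_eq_mul]; ring

/-- A vector orthogonal to `e, …, Aⁿe` sees only the last column of `kry A z`. -/
theorem vecMul_kry {R : Type*} [CommRing R] (A : Matrix (Fin (n + 2)) (Fin (n + 2)) R)
    (z v : Fin (n + 2) → R) (h : ∀ k ≤ n, v ⬝ᵥ (A ^ k *ᵥ 1) = 0) :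
    v ᵥ* kry A z = Pi.single (Fin.last (n + 1)) (v ⬝ᵥ z) := by
  ext j
  by_cases hj : j = Fin.last (n + 1)
  · subst hj; simp [kry, vecMul, dotProduct]
  · have h' : (j : ℕ) ≠ n + 1 := fun h => hj (Fin.ext h)
    rw [Pi.single_eq_of_ne hj, ← h j (by omega)]
    simp [kry, vecMul, dotProduct, h']

open Polynomial in
/-- On coefficient vectors of polynomials of degree at most `n`, `kry A z` evaluates `f(A)e`. -/
theorem kry_mulVec_coeff {R : Type*} [CommRing R] (A : Matrix (Fin (n + 2)) (Fin (n + 2)) R)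
    (z : Fin (n + 2) → R) (f : R[X]) (hf : f.natDegree < n + 1) :
    kry A z *ᵥ (fun i => f.coeff i) = aeval A f *ᵥ 1 := by
  rw [aeval_eq_sum_range' (n := n + 1) hf]
  ext i
  rw [sum_mulVec, Finset.sum_apply, mulVec, dotProduct, Fin.sum_univ_castSucc, Finset.sum_range]
  have : f.coeff (n + 1) = 0 := coeff_eq_zero_of_natDegree_lt hf
  simp only [Fin.val_last, this, mul_zero, add_zero, Fin.val_castSucc]
  refine Finset.sum_congr rfl fun j _ => ?_
  have : (j : ℕ) ≠ n + 1 := by omega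
  rw [smul_mulVec]
  simp [kry, this, mul_comm]

/-! ### Annihilating polynomials of the all-ones vector -/

open Polynomial in
/-- Suppose `[e, Ae, …, Aⁿe, z]` has a one-dimensional kernel. The vector `v`, orthogonal to all
`Aᵏe` but not to `z`, forces the kernel vector to involve only `e, …, Aⁿe`, so it is an annihilating
polynomial `a` of `e`. Its degree is exactly `n`: otherwise `X * a` would be a second relation. -/
theorem exists_minpoly {F : Type*} [Field F] (A : Matrix (Fin (n + 2)) (Fin (n + 2)) F)
    (z v : Fin (n + 2) → F) (hdet : (kry A z).det = 0)
    (hs : ∀ c c', kry A z *ᵥ c = 0 → c ≠ 0 → kry A z *ᵥ c' = 0 → ∃ t : F, c' = t • c)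
    (hv : ∀ k, v ⬝ᵥ (A ^ k *ᵥ 1) = 0) (hvz : v ⬝ᵥ z ≠ 0) :
    ∃ a : F[X], a.Monic ∧ a.natDegree = n ∧ aeval A a *ᵥ 1 = 0 ∧
      ∀ f : F[X], f.natDegree < n + 1 → aeval A f *ᵥ 1 = 0 → ∃ t, f = C t * a := by
  obtain ⟨c, hc0, hc⟩ := exists_mulVec_eq_zero_iff.mpr hdet
  have hlast : c (Fin.last (n + 1)) = 0 := by
    have h1 : v ⬝ᵥ (kry A z *ᵥ c) = 0 := by rw [hc, dotProduct_zero]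
    rw [dotProduct_mulVec, vecMul_kry A z v fun k _ => hv k, single_dotProduct] at h1
    exact (mul_eq_zero.mp h1).resolve_left hvz
  set a0 : F[X] := ∑ i : Fin (n + 1), C (c i.castSucc) * X ^ (i : ℕ) with ha0
  have hcoef : (fun i : Fin (n + 2) => a0.coeff i) = c := by
    ext i
    simp only [ha0, finsetSum_coeff, coeff_C_mul, coeff_X_pow]
    refine Fin.lastCases ?_ (fun i => ?_) i
    · rw [hlast]
      refine Finset.sum_eq_zero fun j _ => ?_
      have : n + 1 ≠ (j : ℕ) := by omega
      simp [this]
    · rw [Finset.sum_eq_single i]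
      · simp
      · intro b _ hb
        have : (i : ℕ) ≠ b := fun h => hb (Fin.ext h.symm)
        simp [this]
      · simp
  have hdeg : a0.natDegree < n + 1 := by
    refine Nat.lt_succ_of_le (natDegree_sum_le_of_forall_le _ _ fun i _ => ?_)
    exact (natDegree_C_mul_X_pow_le _ _).trans (by omega)
  have hne : a0 ≠ 0 := by
    rintro h
    apply hc0
    rw [← hcoef, h]; ext; simp
  have hev : aeval A a0 *ᵥ 1 = 0 := by rw [← kry_mulVec_coeff A z a0 hdeg, hcoef, hc]
  have huniq : ∀ f : F[X], f.natDegree < n + 1 → aeval A f *ᵥ 1 = 0 → ∃ t, f = C t * a0 := by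
    intro f hf hf0
    obtain ⟨t, ht⟩ := hs c (fun i => f.coeff i) hc hc0 (by rw [kry_mulVec_coeff A z f hf, hf0])
    refine ⟨t, ?_⟩
    ext i
    by_cases hi : i < n + 1
    · have := congrFun ht ⟨i, by omega⟩
      rw [← hcoef] at this
      simpa using this
    · rw [coeff_eq_zero_of_natDegree_lt (by omega), coeff_C_mul,
        coeff_eq_zero_of_natDegree_lt (p := a0) (by omega), mul_zero]
  have hdn : a0.natDegree = n := by
    by_contra hd
    have hXd : (X * a0).natDegree = a0.natDegree + 1 := natDegree_X_mul hne
    obtain ⟨t, ht⟩ := huniq (X * a0) (by omega) (by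
      rw [map_mul, ← mulVec_mulVec, hev, mulVec_zero])
    have := natDegree_C_mul_le t a0
    rw [← ht] at this
    omega
  have hl : a0.leadingCoeff ≠ 0 := leadingCoeff_ne_zero.mpr hne
  refine ⟨C (a0.leadingCoeff)⁻¹ * a0, ?_, ?_, ?_, ?_⟩
  · rw [Monic, leadingCoeff_mul, leadingCoeff_C, inv_mul_cancel₀ hl]
  · rw [natDegree_C_mul (inv_ne_zero hl), hdn]
  · rw [map_mul, ← mulVec_mulVec, hev, mulVec_zero]
  · intro f hf hf0
    obtain ⟨t, ht⟩ := huniq f hf hf0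
    refine ⟨t * a0.leadingCoeff, ?_⟩
    rw [← mul_assoc, ← C_mul, mul_assoc, mul_inv_cancel₀ hl, mul_one, ht]

open Polynomial in
/-- The annihilators `a` and `b` of `e` for `A` and `B` coincide as soon as `b(A)e` and `a(B)e` are
eigenvectors (or zero) for one common `μ`: then `(X - μ)(a - b)`, of degree at most `n`, annihilates
`e` for both matrices, hence is the same scalar multiple of `a` and of `b`. -/
theorem minpoly_eq {F : Type*} [Field F] (A B : Matrix (Fin (n + 2)) (Fin (n + 2)) F)
    (a b : F[X]) (ha : a.Monic) (hb : b.Monic) (had : a.natDegree = n) (hbd : b.natDegree = n)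
    (ha0 : aeval A a *ᵥ 1 = 0) (hb0 : aeval B b *ᵥ 1 = 0)
    (hau : ∀ f : F[X], f.natDegree < n + 1 → aeval A f *ᵥ 1 = 0 → ∃ t, f = C t * a)
    (hbu : ∀ f : F[X], f.natDegree < n + 1 → aeval B f *ᵥ 1 = 0 → ∃ t, f = C t * b)
    (μ : F) (y w : Fin (n + 2) → F) (hy : A *ᵥ y = μ • y) (hw : B *ᵥ w = μ • w)
    (s s' : F) (hba : aeval A b *ᵥ 1 = s • y) (hab : aeval B a *ᵥ 1 = s' • w) : a = b := by
  have hX : ∀ (M : Matrix (Fin (n + 2)) (Fin (n + 2)) F)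
      (v : Fin (n + 2) → F) (t : F) (g : F[X]), M *ᵥ v = μ • v →
      aeval M g *ᵥ 1 = t • v → aeval M ((X - C μ) * g) *ᵥ 1 = 0 := by
    intro M v t g hM hg
    rw [map_mul, ← mulVec_mulVec, hg, map_sub, aeval_X, aeval_C, mulVec_smul, sub_mulVec, hM,
      Algebra.algebraMap_eq_smul_one, smul_mulVec, one_mulVec, sub_self, smul_zero]
  by_contra hne
  have hg0 : a - b ≠ 0 := sub_ne_zero.mpr hne
  have hgd : (a - b).natDegree < n := by
    have h := degree_sub_lt_left (p := a) (q := b) (by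
      rw [degree_eq_natDegree ha.ne_zero, degree_eq_natDegree hb.ne_zero, had, hbd])
      ha.ne_zero (by rw [ha.leadingCoeff, hb.leadingCoeff])
    rw [degree_eq_natDegree hg0, degree_eq_natDegree ha.ne_zero, had] at h
    exact_mod_cast h
  have hd : ((X - C μ) * (a - b)).natDegree < n + 1 := by
    rw [natDegree_mul (X_sub_C_ne_zero μ) hg0, natDegree_X_sub_C]; omega
  obtain ⟨t, ht⟩ := hau _ hd (hX A y (-s) _ hy (by
    rw [map_sub, sub_mulVec, ha0, hba, zero_sub, neg_smul]))
  obtain ⟨t', ht'⟩ := hbu _ hd (hX B w s' _ hw (by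
    rw [map_sub, sub_mulVec, hb0, hab, sub_zero]))
  have htt : t = t' := by
    have := congrArg (fun f => coeff f n) (ht.symm.trans ht')
    simp only [coeff_C_mul] at this
    rw [← had, ha.coeff_natDegree, had, ← hbd, hb.coeff_natDegree] at this
    simpa using this
  have ht0 : t ≠ 0 := by
    rintro rfl
    rw [C_0, zero_mul] at ht
    exact mul_ne_zero (X_sub_C_ne_zero μ) hg0 ht
  rw [ht, ← htt] at ht'
  exact hne (mul_left_cancel₀ (C_ne_zero.mpr ht0) ht')

/-! ### Twins and cofactors of the walk matrix -/

theorem twin_pow {A : Matrix (Fin (n + 2)) (Fin (n + 2)) ℤ} {τ τ' : Fin (n + 2)}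
    (htw : IsTwinPair A τ τ') (k : ℕ) : (A ^ k *ᵥ 1) τ = (A ^ k *ᵥ 1) τ' := by
  have h : ∀ k i, (A ^ k *ᵥ 1) (Equiv.swap τ τ' i) = (A ^ k *ᵥ 1) i := by
    intro k
    induction k with
    | zero => simp
    | succ k ih =>
      intro i
      rw [pow_succ', ← mulVec_mulVec]
      simp only [mulVec, dotProduct] at ih ⊢
      rw [← Equiv.sum_comp (Equiv.swap τ τ')]
      refine Finset.sum_congr rfl fun j _ => ?_
      rw [htw, ih]
  have := h k τ'
  rwa [Equiv.swap_apply_right] at this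

theorem alpha_dot {τ τ' : Fin (n + 2)} (hne : τ ≠ τ') (v : Fin (n + 2) → ℤ) :
    alphaVec τ τ' ⬝ᵥ v = v τ' - v τ := by
  have : alphaVec τ τ' = Pi.single τ' 1 - Pi.single τ 1 := by
    ext i
    simp only [alphaVec, Pi.sub_apply, Pi.single_apply]
    split_ifs <;> simp_all
  rw [this, sub_dotProduct, single_one_dotProduct, single_one_dotProduct]

theorem alpha_dot_self {τ τ' : Fin (n + 2)} (hne : τ ≠ τ') :
    alphaVec τ τ' ⬝ᵥ alphaVec τ τ' = 2 := by
  rw [alpha_dot hne]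
  simp [alphaVec, hne.symm]

theorem twin_alpha {A : Matrix (Fin (n + 2)) (Fin (n + 2)) ℤ} (hA : A.IsAdjMatrix)
    {τ τ' : Fin (n + 2)} (hne : τ ≠ τ') (htw : IsTwinPair A τ τ') :
    A *ᵥ alphaVec τ τ' = lam1 A τ τ' • alphaVec τ τ' := by
  ext i
  rw [mulVec, dotProduct_comm, alpha_dot hne]
  have hs : A τ' τ = A τ τ' := hA.symm.apply _ _
  simp only [lam1, Pi.smul_apply, smul_eq_mul, alphaVec]
  split_ifs with h1 h2
  · subst h1; simp [hA.apply_diag]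
  · subst h2; simp [hA.apply_diag, hs]
  · have := htw i τ
    rw [Equiv.swap_apply_of_ne_of_ne h1 h2, Equiv.swap_apply_left] at this
    simp [this]

theorem det_kry_eq_zero {A : Matrix (Fin (n + 2)) (Fin (n + 2)) ℤ}
    {τ τ' : Fin (n + 2)} (hne : τ ≠ τ') (htw : IsTwinPair A τ τ') (z : Fin (n + 2) → ℤ)
    (hz : z τ = z τ') : (kry A z).det = 0 := by
  refine det_zero_of_row_eq hne ?_
  ext j
  simp only [kry, of_apply, hz, twin_pow htw]

theorem cofactor_eq (A : Matrix (Fin (n + 2)) (Fin (n + 2)) ℤ) (z : Fin (n + 2) → ℤ)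
    (i : Fin (n + 2)) : (kry A z).adjugate (Fin.last (n + 1)) i = cofactorLast A i := by
  rw [adjugate_fin_succ_eq_det_submatrix]
  simp only [cofactorLast, Fin.val_last]
  congr 2
  ext r c
  have : (c : ℕ) ≠ n + 1 := by omega
  simp [Xmat, Vmat, walkMatrix, kry, this]
  rfl

/-- The last-column cofactors are proportional to `α`: the rows `τ` and `τ'` of the walk matrix
coincide. -/
theorem cofactor_alpha {A : Matrix (Fin (n + 2)) (Fin (n + 2)) ℤ}
    {τ τ' : Fin (n + 2)} (hne : τ ≠ τ') (htw : IsTwinPair A τ τ') (i : Fin (n + 2)) :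
    cofactorLast A i = -cofactorLast A τ * alphaVec τ τ' i := by
  have hlin : ∀ z : Fin (n + 2) → ℤ, z τ = z τ' → ∑ i, cofactorLast A i * z i = 0 := by
    intro z hz
    rw [← det_kry_eq_zero hne htw z hz, det_kry A z 0]
    simp only [cofactor_eq]
  simp only [alphaVec]
  split_ifs with h1 h2
  · simp [h1]
  · have := hlin (Pi.single τ 1 + Pi.single τ' 1) (by simp [hne, hne.symm])
    simp [Pi.single_apply, mul_add, Finset.sum_add_distrib] at this
    rw [h2]; linarith
  · have := hlin (Pi.single i 1) (by
      rw [Pi.single_eq_of_ne (Ne.symm h1), Pi.single_eq_of_ne (Ne.symm h2)])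
    simpa [Pi.single_apply] using this

theorem det_kry_alpha {A : Matrix (Fin (n + 2)) (Fin (n + 2)) ℤ}
    {τ τ' : Fin (n + 2)} (hne : τ ≠ τ') (htw : IsTwinPair A τ τ') :
    (kry A (alphaVec τ τ')).det = -2 * cofactorLast A τ := by
  rw [det_kry A _ 0]
  simp only [cofactor_eq]
  have h := alpha_dot hne (cofactorLast A)
  have h2 := cofactor_alpha hne htw τ'
  rw [dotProduct_comm, dotProduct] at h
  rw [h, h2]
  simp [alphaVec, hne.symm]; ring

/-! ### Integrality of `dQ` and the level -/

/-- The matrix `det [e, …, Aⁿe, α] • Q` is integral. The adjugate of `[e, …, Aⁿe, α]` expresses it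
through the integral vectors `Bᵏe` and through `Qᵀα`, whose coefficient is a last-column cofactor;
that cofactor times `Qᵀα` has as entries determinants of integer matrices, up to sign. -/
theorem exists_int_smul {A B : Matrix (Fin (n + 2)) (Fin (n + 2)) ℤ}
    {τ τ' : Fin (n + 2)} (hne : τ ≠ τ') (htw : IsTwinPair A τ τ')
    (Q : Matrix (Fin (n + 2)) (Fin (n + 2)) ℚ) (hQ : Qᵀ * Q = 1) (hQe : Qᵀ *ᵥ 1 = 1)
    (hAB : Qᵀ * A.map (Int.castRingHom ℚ) = B.map (Int.castRingHom ℚ) * Qᵀ) :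
    ∃ U : Matrix (Fin (n + 2)) (Fin (n + 2)) ℤ,
      U.map (Int.castRingHom ℚ) = ((kry A (alphaVec τ τ')).det : ℚ) • Q := by
  set α := alphaVec τ τ'
  set f := Int.castRingHom ℚ with hf
  set S := f.range
  suffices h : ∀ i j, (((kry A α).det : ℚ) • Q) i j ∈ S by
    choose U hU using h
    exact ⟨of U, by ext i j; exact hU i j⟩
  have hdet : Q.det ∈ S := by
    have h := congrArg det hQ
    rw [det_mul, det_transpose, det_one] at h
    rcases mul_self_eq_one_iff.mp h with h | h
    · rw [h]; exact one_mem _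
    · rw [h]; exact neg_mem (one_mem _)
  set H := kry A α with hH
  set q := Qᵀ *ᵥ (f ∘ α) with hq
  have hQH : Qᵀ * H.map f = kry (B.map f) q := by
    rw [hH, kry_map, mul_kry hAB hQe]
  -- The `j`-th entry is `± det [e, …, Bⁿe, e_j]`, as `[e, …, Bⁿe, e_j] = Qᵀ [e, …, Aⁿe, Q e_j]`.
  have hκ : ∀ j, (cofactorLast A τ : ℚ) * q j ∈ S := by
    intro j
    have h1 : (kry (A.map f) (Q.col j)).det = -((cofactorLast A τ : ℚ) * q j) := by
      rw [det_kry (A.map f) _ (f ∘ 0), ← kry_map]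
      have : ∀ i, ((kry A 0).map f).adjugate (Fin.last (n + 1)) i
          = -(cofactorLast A τ : ℚ) * f (α i) := by
        intro i
        have h := RingHom.map_adjugate f (kry A 0)
        simp only [RingHom.mapMatrix_apply] at h
        rw [← h, map_apply, cofactor_eq, cofactor_alpha hne htw, map_mul, map_neg]
        rfl
      simp only [this, hq, mulVec, dotProduct, Finset.mul_sum, ← Finset.sum_neg_distrib]
      refine Finset.sum_congr rfl fun i _ => ?_
      simp only [transpose_apply, Function.comp, col_apply]; ring
    have h2 : Qᵀ *ᵥ Q.col j = f ∘ Pi.single j 1 := by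
      have : Q.col j = Q *ᵥ Pi.single j 1 := by simp
      rw [this, mulVec_mulVec, hQ, one_mulVec]
      ext i; simp [Pi.single_apply]
    have h3 : Q.det * (kry (A.map f) (Q.col j)).det ∈ S := by
      rw [← det_transpose Q, ← det_mul, mul_kry hAB hQe, h2, ← kry_map]
      have := RingHom.map_det f (kry B (Pi.single j 1))
      rw [RingHom.mapMatrix_apply] at this
      rw [← this]
      exact ⟨_, rfl⟩
    have h4 := mul_mem hdet h3
    have h5 : Q.det * Q.det = 1 := by rw [← det_one (n := Fin (n + 2)), ← hQ, det_mul, det_transpose]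
    rw [← mul_assoc, h5, one_mul, h1] at h4
    simpa using neg_mem h4
  have key : ((H.det : ℚ) • Q) = (H.adjugate.map f)ᵀ * (kry (B.map f) q)ᵀ := by
    rw [← transpose_mul, ← hQH, Matrix.mul_assoc, ← Matrix.map_mul, mul_adjugate, transpose_mul,
      transpose_transpose, ← transpose_map, transpose_smul, transpose_one]
    have : ((H.det • (1 : Matrix (Fin (n + 2)) (Fin (n + 2)) ℤ)).map f) = (H.det : ℚ) • 1 := by
      ext i j
      simp only [map_apply, Matrix.smul_apply, one_apply]
      split_ifs <;> simp [f]
    rw [this, smul_mul, Matrix.one_mul]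
  intro i j
  rw [key, mul_apply]
  refine sum_mem fun k _ => ?_
  simp only [transpose_apply, map_apply]
  by_cases hk : k = Fin.last (n + 1)
  · subst hk
    rw [cofactor_eq, cofactor_alpha hne htw, map_mul, map_neg]
    have : -f (cofactorLast A τ) * f (alphaVec τ τ' i) * kry (B.map f) q j (Fin.last (n + 1))
        = - f (alphaVec τ τ' i) * ((cofactorLast A τ : ℚ) * q j) := by
      simp [kry, f]; ring
    rw [this]
    exact mul_mem (neg_mem ⟨_, rfl⟩) (hκ j)
  · refine mul_mem ⟨_, rfl⟩ ?_
    have h' : (k : ℕ) ≠ n + 1 := fun h => hk (Fin.ext h)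
    simp only [kry, of_apply, h', if_false, ← pow_map_mulVec_one]
    exact ⟨_, rfl⟩

/-- The level of `Q` divides every nonzero integer `k` with `kQ` integral; in particular it has no
prime factor that `k` lacks. -/
theorem not_dvd_level {m : ℕ} (Q : Matrix (Fin m) (Fin m) ℚ) (p : ℕ) (k : ℤ)
    (hk : ¬ (p : ℤ) ∣ k) (hQ : ∀ i j, ∃ z : ℤ, (k : ℚ) * Q i j = z) : ¬ p ∣ level Q := by
  have hk0 : k ≠ 0 := by rintro rfl; simp at hk
  set S := {k : ℕ | 0 < k ∧ ∀ i j, ((k : ℚ) * Q i j).den = 1} with hS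
  have hiff : ∀ q : ℚ, q.den = 1 ↔ ∃ z : ℤ, q = z := fun q =>
    ⟨fun h => ⟨q.num, ((Rat.den_eq_one_iff q).mp h).symm⟩, by rintro ⟨z, rfl⟩; simp⟩
  have hmem : k.natAbs ∈ S := by
    refine ⟨Int.natAbs_pos.mpr hk0, fun i j => (hiff _).mpr ?_⟩
    obtain ⟨z, hz⟩ := hQ i j
    rcases Int.natAbs_eq k with h | h
    · refine ⟨z, ?_⟩
      rw [← hz, h]; simp
    · refine ⟨-z, ?_⟩
      push_cast
      rw [← hz, h]; simp
  have hl : level Q ∈ S := Nat.sInf_mem ⟨_, hmem⟩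
  have hdvd : level Q ∣ k.natAbs := by
    by_contra hnd
    have hlt := Nat.mod_lt k.natAbs hl.1
    have hmod : k.natAbs % level Q ∈ S := by
      refine ⟨Nat.pos_of_ne_zero fun h => hnd (Nat.dvd_of_mod_eq_zero h), fun i j => ?_⟩
      obtain ⟨z1, hz1⟩ := (hiff _).mp (hmem.2 i j)
      obtain ⟨z2, hz2⟩ := (hiff _).mp (hl.2 i j)
      refine (hiff _).mpr ⟨z1 - (k.natAbs / level Q : ℕ) * z2, ?_⟩
      have h := Nat.mod_add_div k.natAbs (level Q)
      have h' : ((k.natAbs % level Q : ℕ) : ℚ)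
          = (k.natAbs : ℚ) - (level Q : ℚ) * ((k.natAbs / level Q : ℕ) : ℚ) := by
        rw [eq_sub_iff_add_eq]; exact_mod_cast h
      rw [h', Int.cast_sub, Int.cast_mul, Int.cast_natCast]
      rw [← hz1, ← hz2]; ring
    exact absurd (Nat.sInf_le hmod) (not_le.mpr hlt)
  exact fun h => hk (Int.natCast_dvd.mpr (h.trans hdvd))

/-! ### Reduction of `dQ` modulo `p` -/

/-- Over a field of characteristic not two, let `y` be the component of `x` orthogonal to `α`; it
spans the left kernel of `[e, …, Aⁿe, α]` and is an eigenvector of `A` with eigenvalue `μ ≠ l`. Each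
column `u` of `U` is orthogonal to all `Aᵏe`, so `u = t y + a α`; comparing `uᵀu = 0` with
`uᵀAu = 0` gives `a = 0`. Hence `U` has the form `y wᵀ`. -/
theorem col_space {F : Type*} [Field F] (h2 : (2 : F) ≠ 0)
    (A B U : Matrix (Fin (n + 2)) (Fin (n + 2)) F) (α x : Fin (n + 2) → F) (l : F)
    (hA : A.IsSymm) (hα : A *ᵥ α = l • α) (hαα : α ⬝ᵥ α = 2)
    (hαk : ∀ k, α ⬝ᵥ (A ^ k *ᵥ 1) = 0)
    (hs : ∀ c c', c ᵥ* kry A α = 0 → c ≠ 0 → c' ᵥ* kry A α = 0 → ∃ t : F, c' = t • c)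
    (hx : ∀ k ≤ n + 1, x ⬝ᵥ (A ^ k *ᵥ 1) = 0) (hx0 : A *ᵥ x ≠ l • x)
    (hUU : Uᵀ * U = 0) (hAU : A * U = U * B) (hUk : ∀ k, Uᵀ *ᵥ (A ^ k *ᵥ 1) = 0) :
    ∃ (y w : Fin (n + 2) → F) (μ : F), y ≠ 0 ∧ A *ᵥ y = μ • y ∧ y ᵥ* kry A α = 0 ∧
      α ⬝ᵥ y = 0 ∧ U = vecMulVec y w ∧ w ᵥ* B = μ • w := by
  have hsymm : ∀ u v, u ⬝ᵥ A *ᵥ v = (A *ᵥ u) ⬝ᵥ v := by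
    intro u v
    rw [dotProduct_mulVec, ← mulVec_transpose, hA]
  have hpow : ∀ k, A *ᵥ (A ^ k *ᵥ 1) = A ^ (k + 1) *ᵥ 1 := fun k => by
    rw [mulVec_mulVec, pow_succ']
  -- the orthogonal projection away from `α`
  set pr : (Fin (n + 2) → F) → (Fin (n + 2) → F) := fun v => v - (α ⬝ᵥ v / 2) • α with hpr
  have hprα : ∀ v, α ⬝ᵥ pr v = 0 := fun v => by
    simp only [hpr, dotProduct_sub, dotProduct_smul, hαα, smul_eq_mul]
    field_simp; ring
  have hprk : ∀ v k, v ⬝ᵥ (A ^ k *ᵥ 1) = 0 → pr v ⬝ᵥ (A ^ k *ᵥ 1) = 0 := fun v k h => by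
    simp only [hpr, sub_dotProduct, smul_dotProduct, hαk, h, smul_zero, sub_zero]
  have hker : ∀ v, (∀ k ≤ n, v ⬝ᵥ (A ^ k *ᵥ 1) = 0) → α ⬝ᵥ v = 0 → v ᵥ* kry A α = 0 := by
    intro v h h'
    rw [vecMul_kry A α v h, dotProduct_comm, h', Pi.single_zero]
  set y := pr x with hy
  have hyA : A *ᵥ y ≠ l • y := by
    intro h
    apply hx0
    have hxy : x = y + (α ⬝ᵥ x / 2) • α := by simp [hy, hpr]
    rw [hxy, mulVec_add, mulVec_smul, hα, h, smul_add, smul_comm]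
  have hy0 : y ≠ 0 := by
    intro h
    rw [h] at hyA; simp at hyA
  have hyk : y ᵥ* kry A α = 0 := hker _ (fun k hk => hprk _ _ (hx k (by omega))) (hprα x)
  obtain ⟨μ, hμ⟩ := hs y (A *ᵥ y) hyk hy0 (hker _ (fun k hk => by
    rw [← hsymm, hpow]; exact hprk _ _ (hx _ (by omega))) (by
    rw [hsymm, hα, smul_dotProduct, hprα, smul_zero]))
  have hμl : μ ≠ l := by
    rintro rfl; exact hyA hμ
  have hcol : ∀ j, ∃ t : F, U.col j = t • y := by
    intro j
    set u := U.col j with hu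
    have huk : ∀ k, u ⬝ᵥ (A ^ k *ᵥ 1) = 0 := fun k => congrFun (hUk k) j
    obtain ⟨t, ht⟩ := hs y (pr u) hyk hy0 (hker _ (fun k _ => hprk _ _ (huk k)) (hprα u))
    set a := α ⬝ᵥ u / 2 with ha
    have hua : u = t • y + a • α := by rw [← ht]; simp [hpr, ha]
    have huu : u ⬝ᵥ u = 0 := congrFun (congrFun hUU j) j
    have huAu : u ⬝ᵥ A *ᵥ u = 0 := by
      have h : Uᵀ * (A * U) = 0 := by rw [hAU, ← Matrix.mul_assoc, hUU, Matrix.zero_mul]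
      exact congrFun (congrFun h j) j
    have hyα : α ⬝ᵥ y = 0 := hprα x
    have hyα' : y ⬝ᵥ α = 0 := by rw [dotProduct_comm, hyα]
    rw [hua] at huu huAu
    simp only [mulVec_add, mulVec_smul, hμ, hα, dotProduct_add, add_dotProduct, smul_dotProduct,
      dotProduct_smul, hyα, hyα', hαα, smul_eq_mul] at huu huAu
    have h3 : (μ - l) * (t * t * (y ⬝ᵥ y)) = 0 := by linear_combination huAu - l * huu
    have h4 := (mul_eq_zero.mp h3).resolve_left (sub_ne_zero.mpr hμl)
    have h5 : 2 * (a * a) = 0 := by linear_combination huu - h4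
    have h6 : a = 0 := mul_self_eq_zero.mp ((mul_eq_zero.mp h5).resolve_left h2)
    exact ⟨t, by rw [hua, h6, zero_smul, add_zero]⟩
  choose w hw using hcol
  have hU : U = vecMulVec y w := by
    ext i j
    have := congrFun (hw j) i
    simp only [col_apply, Pi.smul_apply, smul_eq_mul] at this
    rw [this, vecMulVec_apply, mul_comm]
  refine ⟨y, w, μ, hy0, hμ, hyk, hprα x, hU, ?_⟩
  rw [hU, mul_vecMulVec, hμ, vecMulVec_mul] at hAU
  obtain ⟨i, hi⟩ := Function.ne_iff.mp hy0
  ext j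
  have := congrFun (congrFun hAU i) j
  simp only [vecMulVec_apply, Pi.smul_apply, smul_eq_mul] at this ⊢
  refine mul_left_cancel₀ hi ?_
  linear_combination -this

open Polynomial in
/-- If `X` maps `Mᵏe` to `p m M'ᵏe` and `z` to a multiple of `p z'`, and `f(M)e ≡ 0 (mod p)` is
lifted to `kry M z *ᵥ c = p h`, then `m f(M')e ≡ X h (mod p)`. -/
theorem transfer {p : ℕ} [Fact p.Prime] (X M M' : Matrix (Fin (n + 2)) (Fin (n + 2)) ℤ)
    (z z' : Fin (n + 2) → ℤ) (m ε : ℤ)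
    (hX : ∀ k, X *ᵥ (M ^ k *ᵥ 1) = ((p : ℤ) * m) • (M' ^ k *ᵥ 1))
    (hz : X *ᵥ z = ((p : ℤ) * ε) • z') (f : (ZMod p)[X]) (hf : f.natDegree < n + 1)
    (c h : Fin (n + 2) → ℤ) (hc : redV p c = fun i : Fin (n + 2) => f.coeff i)
    (hh : kry M z *ᵥ c = (p : ℤ) • h) :
    (m : ZMod p) • (aeval (red p M') f *ᵥ 1) = red p X *ᵥ redV p h := by
  set δ : Fin (n + 2) → ℤ := fun j => if (j : ℕ) = n + 1 then ε else m with hδ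
  have h1 : X * kry M z = (p : ℤ) • (kry M' z' * diagonal δ) := by
    ext i j
    rw [Matrix.smul_apply, mul_diagonal, mul_apply]
    by_cases hj : (j : ℕ) = n + 1
    · have := congrFun hz i
      simp only [mulVec, dotProduct, Pi.smul_apply, smul_eq_mul] at this
      simp only [kry, of_apply, hj, hδ, if_true, this, smul_eq_mul]; ring
    · have := congrFun (hX j) i
      rw [mulVec, dotProduct] at this
      simp only [kry, of_apply, hj, hδ, if_false, this, Pi.smul_apply, smul_eq_mul]; ring
  have h2 : kry M' z' *ᵥ (diagonal δ *ᵥ c) = X *ᵥ h := by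
    have hp0 : (p : ℤ) ≠ 0 := by exact_mod_cast (Fact.out : p.Prime).ne_zero
    apply smul_right_injective _ hp0
    simp only
    rw [← mulVec_smul X, ← hh, mulVec_mulVec c X (kry M z), h1, smul_mulVec, mulVec_mulVec]
  have hk : red p (kry M' z') = kry (red p M') (redV p z') := kry_map _ _ _
  rw [← red_mulVec, ← h2, red_mulVec, hk]
  have h3 : redV p (diagonal δ *ᵥ c) = (m : ZMod p) • fun i : Fin (n + 2) => f.coeff i := by
    ext j
    rw [← hc]
    simp only [redV, Function.comp_apply, mulVec_diagonal, map_mul, Pi.smul_apply, smul_eq_mul, hδ]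
    split_ifs with hj
    · have h0 : (Int.castRingHom (ZMod p)) (c j) = 0 := by
        refine (congrFun hc j).trans ?_
        exact coeff_eq_zero_of_natDegree_lt (by omega)
      rw [h0, mul_zero, mul_zero]
    · rfl
  rw [h3, mulVec_smul, kry_mulVec_coeff _ _ f hf]

open Polynomial in
/-- An integer lift, in coordinates for `kry M z`, of the relation `f(M)e ≡ 0 (mod p)`. -/
theorem exists_lift_ker {p : ℕ} [Fact p.Prime] (M : Matrix (Fin (n + 2)) (Fin (n + 2)) ℤ)
    (z : Fin (n + 2) → ℤ) (f : (ZMod p)[X]) (hf : f.natDegree < n + 1)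
    (h0 : aeval (red p M) f *ᵥ 1 = 0) :
    ∃ c h : Fin (n + 2) → ℤ, (redV p c = fun i : Fin (n + 2) => f.coeff i) ∧
      kry M z *ᵥ c = (p : ℤ) • h := by
  obtain ⟨c, hc⟩ := exists_lift (fun i : Fin (n + 2) => f.coeff i)
  have hc : redV p c = fun i : Fin (n + 2) => f.coeff i := funext hc
  obtain ⟨h, hh⟩ := redV_eq_zero (p := p) (v := kry M z *ᵥ c) (by
    rw [red_mulVec, hc, red, kry_map, kry_mulVec_coeff _ _ f hf, h0])
  exact ⟨c, h, hc, hh⟩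

theorem redV_pow {p : ℕ} (A : Matrix (Fin (n + 2)) (Fin (n + 2)) ℤ) (k : ℕ) :
    redV p (A ^ k *ᵥ 1) = red p A ^ k *ᵥ 1 :=
  funext fun i => pow_map_mulVec_one _ A k i

theorem redV_dot {p k : ℕ} (u v : Fin k → ℤ) :
    redV p u ⬝ᵥ redV p v = ((u ⬝ᵥ v : ℤ) : ZMod p) :=
  (RingHom.map_dotProduct (Int.castRingHom (ZMod p)) u v).symm

/-- The arithmetic core of the argument, with `U = dQ`: an integer matrix `U` intertwining `A` and
`B`, with `UᵀU = UUᵀ = d²` and `Uᵀ Aᵏe = d Bᵏe`, where `d = det [e, …, Aⁿe, α]` is divisible by `p`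
exactly once, vanishes modulo `p`. The hypotheses on `α` are those satisfied by `e_τ' - e_τ` for
twins, and `l` is the corresponding eigenvalue; `x` is a left null vector of the walk matrix modulo
`p` outside that eigenspace. -/
theorem dvd_of_integral {p : ℕ} [Fact p.Prime] (hp2 : ¬ (p : ℤ) ∣ 2)
    (A B U : Matrix (Fin (n + 2)) (Fin (n + 2)) ℤ) (α : Fin (n + 2) → ℤ) (d m l : ℤ)
    (hA : A.IsSymm) (hB : B.IsSymm) (hα : A *ᵥ α = l • α) (hαα : α ⬝ᵥ α = 2)
    (hαk : ∀ k, α ⬝ᵥ (A ^ k *ᵥ 1) = 0) (hd : d = (kry A α).det) (hm : d = p * m)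
    (hpm : ¬ (p : ℤ) ∣ m)
    (hUU : Uᵀ * U = (d * d) • (1 : Matrix (Fin (n + 2)) (Fin (n + 2)) ℤ))
    (hUU' : U * Uᵀ = (d * d) • (1 : Matrix (Fin (n + 2)) (Fin (n + 2)) ℤ))
    (hAU : A * U = U * B) (hUA : ∀ k, Uᵀ *ᵥ (A ^ k *ᵥ 1) = d • (B ^ k *ᵥ 1))
    (hdet : ∀ r : Fin (n + 2) → ℤ, Uᵀ *ᵥ α = (p : ℤ) • r → (kry B r).det ^ 2 = (m * d) ^ 2)
    (x : Fin (n + 2) → ZMod p) (hx : ∀ k ≤ n + 1, x ⬝ᵥ (red p A ^ k *ᵥ 1) = 0)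
    (hx0 : red p A *ᵥ x ≠ (l : ZMod p) • x) (i j : Fin (n + 2)) : (p : ℤ) ∣ U i j := by
  have hpZ : Prime (p : ℤ) := Nat.prime_iff_prime_int.mp Fact.out
  have hp0 : (p : ℤ) ≠ 0 := hpZ.ne_zero
  have hm0 : m ≠ 0 := by rintro rfl; simp at hpm
  have hd0 : d ≠ 0 := by rw [hm]; exact mul_ne_zero hp0 hm0
  have hdp : (d : ZMod p) = 0 := by rw [hm]; simp
  have hmp : (m : ZMod p) ≠ 0 := by rwa [Ne, ZMod.intCast_zmod_eq_zero_iff_dvd]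
  have h2p : (2 : ZMod p) ≠ 0 := by
    have : ((2 : ℤ) : ZMod p) ≠ 0 := by rwa [Ne, ZMod.intCast_zmod_eq_zero_iff_dvd]
    simpa using this
  have hdetA : ¬ (p : ℤ) ^ 2 ∣ (kry A α).det := by
    rw [← hd, hm, pow_two, mul_dvd_mul_iff_left hp0]; exact hpm
  have hkA : kry (red p A) (redV p α) = red p (kry A α) := (kry_map _ A α).symm
  have hαp : red p A *ᵥ redV p α = (l : ZMod p) • redV p α := by
    rw [← red_mulVec, hα]; ext; simp
  have hααp : redV p α ⬝ᵥ redV p α = 2 := by rw [redV_dot, hαα]; simp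
  have hαkp : ∀ k, redV p α ⬝ᵥ (red p A ^ k *ᵥ 1) = 0 := fun k => by
    rw [← redV_pow, redV_dot, hαk]; simp
  obtain ⟨y, w, μ, hy0, hyμ, hyk, hαy, hUyw, hwB⟩ := col_space h2p (red p A) (red p B) (red p U)
    (redV p α) x l (by rw [Matrix.IsSymm, ← transpose_map, hA]) hαp hααp hαkp
    (by
      intro c c' hc hc0 hc'
      rw [hkA, ← mulVec_transpose, red, ← transpose_map] at hc hc'
      exact ker_simple _ (by rwa [det_transpose]) c c' hc hc0 hc')
    hx hx0
    (by
      rw [red, ← transpose_map, ← Matrix.map_mul, hUU]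
      ext
      simp only [map_apply, Matrix.smul_apply, smul_eq_mul, Int.coe_castRingHom, Int.cast_mul,
        hdp, zero_mul, Matrix.zero_apply])
    (by rw [red, red, red, ← Matrix.map_mul, ← Matrix.map_mul, hAU])
    (fun k => by
      rw [← redV_pow, red, ← transpose_map, ← red_mulVec, hUA]
      ext; simp [hdp])
  have hUt : ∀ v, red p Uᵀ *ᵥ v = (y ⬝ᵥ v) • w := by
    intro v
    have h1 : red p Uᵀ = (red p U)ᵀ := transpose_map
    rw [h1, hUyw]
    ext i
    simp only [mulVec, dotProduct, transpose_apply, vecMulVec_apply, Pi.smul_apply, smul_eq_mul,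
      Finset.sum_mul]
    exact Finset.sum_congr rfl fun _ _ => by ring
  have hUv : ∀ v, red p U *ᵥ v = (w ⬝ᵥ v) • y := by
    intro v
    rw [hUyw]
    ext i
    simp only [mulVec, dotProduct, vecMulVec_apply, Pi.smul_apply, smul_eq_mul, Finset.sum_mul]
    exact Finset.sum_congr rfl fun _ _ => by ring
  -- The vector `r = Uᵀα / p` plays for `B` the role of `α`
  obtain ⟨r, hr⟩ := redV_eq_zero (p := p) (v := Uᵀ *ᵥ α) (by
    rw [red_mulVec, hUt, dotProduct_comm, hαy, zero_smul])
  have hdetB := hdet r hr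
  have hdetB2 : ¬ (p : ℤ) ^ 2 ∣ (kry B r).det := by
    intro h
    have h1 := pow_dvd_pow_of_dvd h 2
    rw [hdetB, Int.pow_dvd_pow_iff two_ne_zero, hm, ← mul_assoc, mul_comm m, mul_assoc, pow_two,
      mul_dvd_mul_iff_left hp0] at h1
    exact (hpZ.dvd_or_dvd h1).elim hpm hpm
  have hdetB1 : (kry (red p B) (redV p r)).det = 0 := by
    rw [← kry_map, ← RingHom.mapMatrix_apply, ← RingHom.map_det]
    have : (p : ℤ) ∣ (kry B r).det := by
      refine hpZ.dvd_of_dvd_pow (n := 2) ?_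
      rw [hdetB, hm]
      exact dvd_pow (Dvd.intro _ (by ring : (p : ℤ) * (m * m) = _)) two_ne_zero
    exact (ZMod.intCast_zmod_eq_zero_iff_dvd _ _).mpr this
  have hdetA1 : (kry (red p A) (redV p α)).det = 0 := by
    rw [← kry_map, ← RingHom.mapMatrix_apply, ← RingHom.map_det, ← hd]
    exact hdp
  have hdotU : ∀ u v, (Uᵀ *ᵥ u) ⬝ᵥ (Uᵀ *ᵥ v) = d * d * (u ⬝ᵥ v) := by
    intro u v
    rw [dotProduct_mulVec, vecMul_transpose, mulVec_mulVec, hUU', smul_mulVec, one_mulVec,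
      smul_dotProduct, smul_eq_mul]
  have hrk : ∀ k, r ⬝ᵥ (B ^ k *ᵥ 1) = 0 := by
    intro k
    have h := hdotU α (A ^ k *ᵥ 1)
    rw [hr, hUA, hαk, smul_dotProduct, dotProduct_smul, mul_zero, smul_eq_mul, smul_eq_mul] at h
    exact (mul_eq_zero.mp ((mul_eq_zero.mp h).resolve_left hp0)).resolve_left hd0
  have hrr : r ⬝ᵥ r = 2 * m * m := by
    have h := hdotU α α
    rw [hr, hαα, smul_dotProduct, dotProduct_smul, smul_eq_mul, smul_eq_mul, hm] at h
    refine mul_left_cancel₀ hp0 (mul_left_cancel₀ hp0 ?_)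
    linear_combination h
  obtain ⟨a, ham, had, ha0, hau⟩ := exists_minpoly (red p A) (redV p α) (redV p α) hdetA1
    (fun c c' hc hc0 hc' => by
      rw [hkA] at hc hc'; exact ker_simple _ hdetA c c' hc hc0 hc') hαkp (by rwa [hααp])
  obtain ⟨b, hbm, hbd, hb0, hbu⟩ := exists_minpoly (red p B) (redV p r) (redV p r) hdetB1
    (fun c c' hc hc0 hc' => by
      rw [← kry_map] at hc hc'; exact ker_simple _ hdetB2 c c' hc hc0 hc')
    (fun k => by rw [← redV_pow, redV_dot, hrk]; simp)
    (by
      rw [redV_dot, hrr]; push_cast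
      exact mul_ne_zero (mul_ne_zero h2p hmp) hmp)
  obtain ⟨c, h, hc, hh⟩ := exists_lift_ker A α a (by omega) ha0
  obtain ⟨c', h', hc', hh'⟩ := exists_lift_ker B r b (by omega) hb0
  have hU1 : U *ᵥ 1 = d • 1 := by
    have h1 : U *ᵥ (Uᵀ *ᵥ 1) = (d * d) • 1 := by
      rw [mulVec_mulVec, hUU', smul_mulVec, one_mulVec]
    have h2 : Uᵀ *ᵥ 1 = d • 1 := by simpa using hUA 0
    rw [h2, mulVec_smul, mul_smul] at h1
    exact smul_right_injective _ hd0 h1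
  have hUB : ∀ k, U *ᵥ (B ^ k *ᵥ 1) = ((p : ℤ) * m) • (A ^ k *ᵥ 1) := by
    intro k
    have h1 : U * B ^ k = A ^ k * U := SemiconjBy.pow_right (a := U) hAU.symm k
    rw [mulVec_mulVec, h1, ← mulVec_mulVec, hU1, mulVec_smul, hm]
  have hUr : U *ᵥ r = ((p : ℤ) * (m * m)) • α := by
    apply smul_right_injective _ hp0
    simp only
    rw [← mulVec_smul, ← hr, mulVec_mulVec, hUU', smul_mulVec, one_mulVec, smul_smul, hm]
    congr 1; ring
  have hab := transfer Uᵀ A B α r m 1 (fun k => by rw [hUA, hm]) (by rw [hr, mul_one]) a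
    (by omega) c h hc hh
  have hba := transfer U B A r α m (m * m) hUB hUr b (by omega) c' h' hc' hh'
  rw [hUt] at hab
  rw [hUv] at hba
  have hwB' : red p B *ᵥ w = μ • w := by
    rw [← hwB, ← vecMul_transpose, red, ← transpose_map, hB]
  have hab' := (eq_inv_smul_iff₀ hmp).mpr hab
  have hba' := (eq_inv_smul_iff₀ hmp).mpr hba
  rw [smul_smul] at hab' hba'
  -- Both annihilators carry `e` into an eigenline for the common eigenvalue `μ`.
  have heq : a = b := minpoly_eq (red p A) (red p B) a b ham hbm had hbd ha0 hb0 hau hbu μ y w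
    hyμ hwB' _ _ hba' hab'
  -- The annihilator relation of `A` holds modulo `p` but is not degenerate modulo `p²`.
  have hyh : y ⬝ᵥ redV p h ≠ 0 := by
    refine dot_ne_zero (kry A α) hdetA c h hh ?_ y hy0 (by rw [← hkA, hyk])
    rw [hc]
    intro h0
    have h1 := congrFun h0 ⟨n, by omega⟩
    simp only [Pi.zero_apply] at h1
    rw [← had, ham.coeff_natDegree] at h1
    exact one_ne_zero h1
  have hw : w = 0 := by
    rw [heq, hb0, smul_zero] at hab
    exact (smul_eq_zero.mp hab.symm).resolve_left hyh
  have h0 : red p U i j = 0 := by rw [hUyw, hw]; simp [vecMulVec_apply]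
  rw [← ZMod.intCast_zmod_eq_zero_iff_dvd]
  exact h0

/-- under the `𝔽_p` condition, `p` does not divide the level of any `Q ∈ 𝒬_G`. -/
theorem p_not_dvd_level
    (n : ℕ) (A : Matrix (Fin (n + 2)) (Fin (n + 2)) ℤ)
    (hA : A.IsAdjMatrix) (hac : IsAlmostControllable A)
    (τ τ' : Fin (n + 2)) (hlt : τ < τ') (htw : IsTwinPair A τ τ')
    (b : ℤ) (hodd : Odd b) (hsf : Squarefree b) (hpos : 0 < b)
    (hcof : cofactorLast A τ = 2 ^ ((n + 2) / 2 - 1) * b ∨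
            cofactorLast A τ = -(2 ^ ((n + 2) / 2 - 1) * b))
    (p : ℕ) (hp : p.Prime) (hp2 : p ≠ 2) (hdvd : (p : ℤ) ∣ b)
    (hx : ∃ x : Fin (n + 2) → ZMod p,
      ((walkMatrix A).map ((↑) : ℤ → ZMod p))ᵀ *ᵥ x = 0 ∧
      (A.map ((↑) : ℤ → ZMod p) -
        ((lam1 A τ τ' : ZMod p)) •
          (1 : Matrix (Fin (n + 2)) (Fin (n + 2)) (ZMod p))) *ᵥ x ≠ 0) :
    ∀ Q : Matrix (Fin (n + 2)) (Fin (n + 2)) ℚ, IsRegularOrthogonal Q →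
      (Qᵀ * A.map ((↑) : ℤ → ℚ) * Q).IsAdjMatrix → ¬ p ∣ level Q := by
  intro Q hQ hadj
  have : Fact p.Prime := ⟨hp⟩
  have hne : τ ≠ τ' := hlt.ne
  obtain ⟨hQQ, hQe⟩ := hQ
  have hQe1 : Q *ᵥ 1 = 1 := hQe
  have hQe' : Qᵀ *ᵥ 1 = 1 := by
    conv_lhs => rw [← hQe1]
    rw [mulVec_mulVec, hQQ, one_mulVec]
  have hQQ' : Q * Qᵀ = 1 := mul_eq_one_comm.mp hQQ
  set f := Int.castRingHom ℚ with hf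
  obtain ⟨B, hB⟩ : ∃ B : Matrix (Fin (n + 2)) (Fin (n + 2)) ℤ, B.map f = Qᵀ * A.map f * Q := by
    have : ∀ i j, ∃ z : ℤ, f z = (Qᵀ * A.map f * Q) i j := fun i j => by
      rcases hadj.zero_or_one i j with h | h
      · exact ⟨0, by rw [map_zero]; exact h.symm⟩
      · exact ⟨1, by rw [map_one]; exact h.symm⟩
    choose B hB using this
    exact ⟨of B, by ext i j; exact hB i j⟩
  have hBs : B.IsSymm := by
    have h : (Qᵀ * A.map f * Q).IsSymm := hadj.symm
    rw [← hB] at h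
    ext i j
    have := h.apply i j
    simpa [f] using this
  have hAB : Qᵀ * A.map f = B.map f * Qᵀ := by
    rw [hB, Matrix.mul_assoc _ Q, hQQ', Matrix.mul_one]
  obtain ⟨U, hU⟩ : ∃ U : Matrix (Fin (n + 2)) (Fin (n + 2)) ℤ,
      U.map f = ((kry A (alphaVec τ τ')).det : ℚ) • Q :=
    exists_int_smul hne htw Q hQQ hQe' hAB
  set α := alphaVec τ τ' with hα
  set d := (kry A α).det with hd
  -- `p` divides `d` exactly once
  have hpZ : Prime (p : ℤ) := Nat.prime_iff_prime_int.mp hp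
  have hdval : d = -2 * cofactorLast A τ := det_kry_alpha hne htw
  have hp2' : ¬ (p : ℤ) ∣ 2 := by
    intro h
    have h' : p ∣ 2 := by exact_mod_cast h
    exact hp2 ((Nat.prime_dvd_prime_iff_eq hp Nat.prime_two).mp h')
  have hpd : (p : ℤ) ∣ d := by
    rw [hdval]
    refine Dvd.dvd.mul_left ?_ _
    rcases hcof with h | h <;> rw [h]
    · exact hdvd.mul_left _
    · exact (hdvd.mul_left _).neg_right
  have hpd2 : ¬ (p : ℤ) ^ 2 ∣ d := by
    intro h
    have h1 : (p : ℤ) ^ 2 ∣ (2 * 2 ^ ((n + 2) / 2 - 1)) * b := by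
      rw [hdval] at h
      rcases hcof with h' | h' <;> rw [h'] at h
      · rw [show (2 * 2 ^ ((n + 2) / 2 - 1)) * b
          = -(-2 * (2 ^ ((n + 2) / 2 - 1) * b)) by ring]
        exact h.neg_right
      · rwa [show (2 * 2 ^ ((n + 2) / 2 - 1)) * b
          = (-2 * -(2 ^ ((n + 2) / 2 - 1) * b)) by ring]
    rw [← pow_succ'] at h1
    have h2 := hpZ.pow_dvd_of_dvd_mul_left 2 (fun h => hp2' (hpZ.dvd_of_dvd_pow h)) h1
    exact hpZ.not_isUnit (hsf _ (by rwa [pow_two] at h2))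
  obtain ⟨m, hm⟩ := hpd
  have hpm : ¬ (p : ℤ) ∣ m := fun h => hpd2 (by
    rw [hm, pow_two]; exact mul_dvd_mul_left _ h)
  have hinj : Function.Injective f := Int.cast_injective
  have hinjM : ∀ {M N : Matrix (Fin (n + 2)) (Fin (n + 2)) ℤ}, M.map f = N.map f → M = N :=
    fun h => Matrix.map_injective hinj h
  -- integral relations between `A`, `B` and `U`
  have hUt : Uᵀ.map f = (d : ℚ) • Qᵀ := by rw [transpose_map, hU, transpose_smul]
  have hscal : ((d * d) • (1 : Matrix (Fin (n + 2)) (Fin (n + 2)) ℤ)).map f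
      = ((d : ℚ) * d) • 1 := by
    ext i j
    simp only [map_apply, Matrix.smul_apply, one_apply]
    split_ifs <;> simp [f]
  have hUU : Uᵀ * U = (d * d) • (1 : Matrix (Fin (n + 2)) (Fin (n + 2)) ℤ) := by
    apply hinjM
    rw [Matrix.map_mul, hUt, hU, hscal, Matrix.smul_mul, Matrix.mul_smul, hQQ, smul_smul]
  have hUU' : U * Uᵀ = (d * d) • (1 : Matrix (Fin (n + 2)) (Fin (n + 2)) ℤ) := by
    apply hinjM
    rw [Matrix.map_mul, hUt, hU, hscal, Matrix.smul_mul, Matrix.mul_smul, hQQ', smul_smul]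
  have hAU : A * U = U * B := by
    apply hinjM
    rw [Matrix.map_mul, Matrix.map_mul, hU, hB, Matrix.mul_smul, Matrix.smul_mul,
      ← Matrix.mul_assoc, ← Matrix.mul_assoc, hQQ', Matrix.one_mul]
  have hUA : ∀ k, Uᵀ *ᵥ (A ^ k *ᵥ 1) = d • (B ^ k *ᵥ 1) := by
    intro k
    ext i
    apply hinj
    have h := congrFun (pow_mulVec_one_conj hAB hQe' k) i
    have hA1 : f ∘ (A ^ k *ᵥ 1) = (A.map f) ^ k *ᵥ 1 :=
      funext fun i => pow_map_mulVec_one f A k i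
    rw [RingHom.map_mulVec, hUt, hA1, smul_mulVec, Pi.smul_apply, h, ← pow_map_mulVec_one f B,
      Pi.smul_apply, smul_eq_mul, smul_eq_mul, map_mul]
    rfl
  have hdet : ∀ r : Fin (n + 2) → ℤ, Uᵀ *ᵥ α = (p : ℤ) • r →
      (kry B r).det ^ 2 = (m * d) ^ 2 := by
    intro r hr
    have hp0 : (p : ℚ) ≠ 0 := by exact_mod_cast hp.ne_zero
    have h1 : f ∘ r = (m : ℚ) • (Qᵀ *ᵥ (f ∘ α)) := by
      ext i
      have h := congrArg f (congrFun hr i)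
      rw [RingHom.map_mulVec, hUt, smul_mulVec, hm] at h
      simp only [Pi.smul_apply, smul_eq_mul, map_mul, Int.cast_mul, mul_assoc] at h
      exact (mul_left_cancel₀ hp0 h).symm
    have h2 : f (kry B r).det = m * (Q.det * d) := by
      rw [RingHom.map_det, RingHom.mapMatrix_apply, kry_map, h1, det_kry_smul,
        ← mul_kry hAB hQe', det_mul, det_transpose, ← kry_map, ← RingHom.mapMatrix_apply,
        ← RingHom.map_det]
      rfl
    have h3 : Q.det * Q.det = 1 := by
      rw [← det_one (n := Fin (n + 2)), ← hQQ, det_mul, det_transpose]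
    apply hinj
    rw [map_pow, h2, map_pow, map_mul]
    change _ = ((m : ℚ) * d) ^ 2
    linear_combination ((m : ℚ) * d) ^ 2 * h3
  obtain ⟨x, hxW, hxA⟩ := hx
  have hαk : ∀ k, α ⬝ᵥ (A ^ k *ᵥ 1) = 0 := fun k => by
    rw [alpha_dot hne, twin_pow htw, sub_self]
  have hdvdU := dvd_of_integral hp2' A B U α d m (lam1 A τ τ') hA.symm hBs
    (twin_alpha hA hne htw) (alpha_dot_self hne) hαk hd hm hpm hUU hUU' hAU hUA hdet x
    (fun k hk => by
      have h := congrFun hxW ⟨k, by omega⟩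
      rw [dotProduct_comm]
      refine Eq.trans ?_ h
      simp only [mulVec, dotProduct]
      refine Finset.sum_congr rfl fun i _ => ?_
      congr 1
      exact (pow_map_mulVec_one (Int.castRingHom (ZMod p)) A k i).symm)
    (fun h => hxA (by
      rw [sub_mulVec, smul_mulVec, one_mulVec, sub_eq_zero]
      exact h))
  refine not_dvd_level Q p m hpm fun i j => ?_
  obtain ⟨z, hz⟩ := hdvdU i j
  refine ⟨z, ?_⟩
  have hp0 : (p : ℚ) ≠ 0 := by exact_mod_cast hp.ne_zero
  have h : (U i j : ℚ) = (d : ℚ) * Q i j := congrFun (congrFun hU i) j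
  rw [hz, hm] at h
  refine mul_left_cancel₀ hp0 ?_
  rw [← mul_assoc]
  push_cast at h
  exact h.symm

end AlmostControllableGraphs
end

section
/- Let n ≥ 2, let G be an almost controllable graph on Fin n with twins τ < τ′ such that the (τ,n)-cofactor of W(G) equals ±2^{⌊n/2⌋−1}·b for an odd, square-free, positive integer b, and let k = ⌊n/2⌋. Let W̃₁ be the n×k integer matrix with columns e, A(G)²e, A(G)⁴e, …, A(G)^{2k−2}e if n is even, and with columns A(G)²e, A(G)⁴e, …, A(G)^{2k}e if n is odd. Then every entry of W(G)ᵀ·W̃₁ is even, and the matrix (1/2)·W(G)ᵀ·W̃₁ has rank k over 𝔽₂ (i.e., it has full column rank mod 2). -/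
/-!
The statement reduces to a determinant computation with the Hankel matrix of walk counts
`h m = eᵀ Aᵐ e`. All `h m` with `m ≥ 1` are even, because `A` is symmetric with zero diagonal
(`two_dvd_walkCount`), while `h 0` is the number `N = n + 2` of vertices. Twins have equal rows in
`V = [e, Ae, …, A^{N-2}e]`, so `VᵀV = Xᵀ D X`, where `X` is `V` without row `τ` and `D` is
diagonal with a single entry `2` and all others `1`; hence
`det (VᵀV) = 2 (det X)² = 2^{2k-1} b²` with `k = ⌊N/2⌋` (`det_gram`).

If `N` is even, `VᵀV` has order `2k - 1` and only even entries, so `VᵀV / 2` has determinant `b²`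
and is invertible mod 2. The columns of `VᵀW̃₁ / 2` are among its columns.

If `N` is odd, `VᵀV` has order `2k`, and halving all columns but the first again leaves the
determinant `b²`. Since `h (i + (2j + 2)) = h ((i + 1) + (2j + 1))`, the first
`2k - 1` rows of `WᵀW̃₁ / 2` occur in this matrix one row lower, in the columns of odd index.
The first column is `(1, 0, …, 0)` mod 2, so a relation among the columns of `WᵀW̃₁ / 2` can be
completed to a relation among the columns of the whole matrix by adjusting its first coefficient.
-/

open Matrix

namespace AlmostControllableGraphs

variable {n : ℕ}

/-- The matrix `W̃₁` with columns `e, A²e, …, A^{2k-2}e` (n even) or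
`A²e, A⁴e, …, A^{2k}e` (n odd), where `k = ⌊n/2⌋` and the number of vertices is `n + 2`. -/
def tildeW1 {n : ℕ} (A : Matrix (Fin (n + 2)) (Fin (n + 2)) ℤ) :
    Matrix (Fin (n + 2)) (Fin ((n + 2) / 2)) ℤ :=
  Matrix.of fun i j =>
    if Even n then ((A ^ (2 * (j : ℕ))) *ᵥ eVec (n + 2)) i
    else ((A ^ (2 * (j : ℕ) + 2)) *ᵥ eVec (n + 2)) i

/-- The walk count `h m = eᵀ Aᵐ e`. -/
def walkCount (A : Matrix (Fin (n + 2)) (Fin (n + 2)) ℤ) (m : ℕ) : ℤ :=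
  eVec (n + 2) ⬝ᵥ (A ^ m *ᵥ eVec (n + 2))

lemma walkCount_add {A : Matrix (Fin (n + 2)) (Fin (n + 2)) ℤ} (hA : A.IsSymm) (a c : ℕ) :
    (A ^ a *ᵥ eVec (n + 2)) ⬝ᵥ (A ^ c *ᵥ eVec (n + 2)) = walkCount A (a + c) := by
  have hs : (A ^ a)ᵀ = A ^ a := by rw [transpose_pow, hA.eq]
  rw [walkCount, pow_add, ← mulVec_mulVec, dotProduct_mulVec _ (A ^ a), ← mulVec_transpose, hs]

lemma two_dvd_quadratic {A : Matrix (Fin (n + 2)) (Fin (n + 2)) ℤ} (hA : A.IsAdjMatrix)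
    (x : Fin (n + 2) → ℤ) : (2 : ℤ) ∣ x ⬝ᵥ (A *ᵥ x) := by
  have key : ((x ⬝ᵥ (A *ᵥ x) : ℤ) : ZMod 2) = 0 := by
    simp only [dotProduct, mulVec, Finset.mul_sum]
    rw [← Finset.sum_product', Int.cast_sum]
    -- the terms at `(i, j)` and `(j, i)` cancel in characteristic 2; diagonal terms vanish
    refine Finset.sum_involution (fun p _ => p.swap) ?_ ?_ ?_ ?_
    · rintro ⟨i, j⟩ -
      have : x j * (A j i * x i) = x i * (A i j * x j) := by
        rw [hA.symm.apply i j]; ring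
      simp only [Prod.swap]
      rw [this]
      exact CharTwo.add_self_eq_zero _
    · rintro ⟨i, j⟩ - h hij
      apply h
      have : i = j := (congrArg Prod.snd hij)
      subst this
      simp [hA.apply_diag]
    · simp
    · simp
  exact (ZMod.intCast_zmod_eq_zero_iff_dvd _ 2).1 key

lemma two_dvd_walkCount {A : Matrix (Fin (n + 2)) (Fin (n + 2)) ℤ} (hA : A.IsAdjMatrix)
    (m : ℕ) (hm : 0 < m) : (2 : ℤ) ∣ walkCount A m := by
  induction m using Nat.strong_induction_on with
  | _ m ih =>
    obtain ⟨s, rfl | rfl⟩ := Nat.even_or_odd' m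
    · -- `∑ xᵢ² ≡ ∑ xᵢ` for `x = Aˢ e`
      have h1 := ih s (by omega) (by omega)
      rw [two_mul, ← walkCount_add hA.symm]
      have h2 : (2 : ℤ) ∣ (A ^ s *ᵥ eVec (n + 2)) ⬝ᵥ (A ^ s *ᵥ eVec (n + 2)) - walkCount A s := by
        simp only [walkCount, dotProduct, eVec]
        rw [← Finset.sum_sub_distrib]
        refine Finset.dvd_sum fun i _ => ?_
        rw [one_mul, ← mul_sub_one]
        exact (Int.even_mul_pred_self _).two_dvd
      exact (Int.dvd_iff_dvd_of_dvd_sub h2).2 h1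
    · have h1 := two_dvd_quadratic hA (A ^ s *ᵥ eVec (n + 2))
      rw [mulVec_mulVec, ← pow_succ', walkCount_add hA.symm] at h1
      convert h1 using 2
      omega

lemma walk_swap {A : Matrix (Fin (n + 2)) (Fin (n + 2)) ℤ} {τ τ' : Fin (n + 2)}
    (htw : IsTwinPair A τ τ') (m : ℕ) (i : Fin (n + 2)) :
    (A ^ m *ᵥ eVec (n + 2)) (Equiv.swap τ τ' i) = (A ^ m *ᵥ eVec (n + 2)) i := by
  induction m generalizing i with
  | zero => simp [eVec]
  | succ m ih =>
    rw [pow_succ', ← mulVec_mulVec]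
    simp only [mulVec, dotProduct] at ih ⊢
    rw [← Equiv.sum_comp (Equiv.swap τ τ')]
    exact Finset.sum_congr rfl fun j _ => by rw [htw, ih]

lemma Vmat_gram {A : Matrix (Fin (n + 2)) (Fin (n + 2)) ℤ} (hA : A.IsAdjMatrix)
    (r c : Fin (n + 1)) : ((Vmat A)ᵀ * Vmat A) r c = walkCount A (r + c) := by
  rw [← walkCount_add hA.symm]
  rfl

/-- The Gram determinant of `V` in terms of the minor at `τ`; the factor `2` comes from the row of
`τ` being repeated at `τ'`. -/
lemma det_gram {A : Matrix (Fin (n + 2)) (Fin (n + 2)) ℤ} {τ τ' : Fin (n + 2)} (hne : τ ≠ τ')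
    (htw : IsTwinPair A τ τ') :
    ((Vmat A)ᵀ * Vmat A).det = 2 * (Xmat A τ).det ^ 2 := by
  obtain ⟨r₀, hr₀⟩ := Fin.exists_succAbove_eq hne.symm
  have hrow : ∀ c, Vmat A τ c = Xmat A τ r₀ c := by
    intro c
    have := walk_swap htw c τ'
    rw [Equiv.swap_apply_right] at this
    simpa [Xmat, Vmat, walkMatrix, hr₀] using this
  have hfac : (Vmat A)ᵀ * Vmat A =
      (Xmat A τ)ᵀ * diagonal (Pi.mulSingle r₀ (2 : ℤ)) * Xmat A τ := by
    ext a c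
    rw [mul_apply, mul_apply, Fin.sum_univ_succAbove _ τ]
    simp only [mul_diagonal, transpose_apply, hrow]
    have : ∀ r, Xmat A τ r a * (Pi.mulSingle r₀ (2 : ℤ) : Fin (n + 1) → ℤ) r * Xmat A τ r c =
        (if r = r₀ then Xmat A τ r a * Xmat A τ r c else 0) + Xmat A τ r a * Xmat A τ r c := by
      intro r
      by_cases h : r = r₀
      · subst h; simp; ring
      · simp [h]
    simp only [this, Finset.sum_add_distrib, Finset.sum_ite_eq', Finset.mem_univ, if_true]
    rfl
  rw [hfac, det_mul, det_mul, det_transpose, det_diagonal, Finset.prod_pi_mulSingle']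
  simp
  ring

lemma mulVec_eq_zero_of_odd_det {m : ℕ} {M : Matrix (Fin m) (Fin m) ℤ} (hM : Odd M.det)
    {v : Fin m → ZMod 2} (hv : M.map ((↑) : ℤ → ZMod 2) *ᵥ v = 0) : v = 0 := by
  refine eq_zero_of_mulVec_eq_zero ?_ hv
  have : (M.map ((↑) : ℤ → ZMod 2)).det = ((M.det : ℤ) : ZMod 2) :=
    (RingHom.map_det (Int.castRingHom (ZMod 2)) M).symm
  rw [this, Ne, ZMod.intCast_zmod_eq_zero_iff_dvd]
  simpa [← even_iff_two_dvd] using hM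

lemma rank_eq_of_mulVec_injective {m k : ℕ} {M : Matrix (Fin m) (Fin k) (ZMod 2)}
    (h : ∀ u, M *ᵥ u = 0 → u = 0) : M.rank = k := by
  rw [Matrix.rank, LinearMap.finrank_range_of_inj]
  · simp
  · rw [← LinearMap.ker_eq_bot, LinearMap.ker_eq_bot']
    exact h

/-- `VᵀV` with every column divided by `2`, except that the first column is kept when the number of
vertices `n + 2` is odd. -/
def halfGram (A : Matrix (Fin (n + 2)) (Fin (n + 2)) ℤ) :
    Matrix (Fin (n + 1)) (Fin (n + 1)) ℤ :=
  of fun r c => if Odd n ∧ c = 0 then walkCount A (r + c) else walkCount A (r + c) / 2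

lemma walkCount_zero (A : Matrix (Fin (n + 2)) (Fin (n + 2)) ℤ) : walkCount A 0 = n + 2 := by
  simp [walkCount, eVec, dotProduct]

lemma two_dvd_walkCount' {A : Matrix (Fin (n + 2)) (Fin (n + 2)) ℤ} (hA : A.IsAdjMatrix)
    (m : ℕ) (hm : Even n ∨ 0 < m) : (2 : ℤ) ∣ walkCount A m := by
  rcases Nat.eq_zero_or_pos m with rfl | h
  · have hn : Even n := by simpa using hm
    rw [walkCount_zero]
    exact dvd_add (by exact_mod_cast hn.two_dvd) dvd_rfl
  · exact two_dvd_walkCount hA m h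

/-- `halfGram A` has odd determinant: its determinant is `b²`. -/
lemma odd_det_halfGram {A : Matrix (Fin (n + 2)) (Fin (n + 2)) ℤ} (hA : A.IsAdjMatrix)
    {b : ℤ} (hb : Odd b)
    (hdet : ((Vmat A)ᵀ * Vmat A).det = 2 * (2 ^ ((n + 2) / 2 - 1) * b) ^ 2) :
    Odd (halfGram A).det := by
  have hfac : (Vmat A)ᵀ * Vmat A =
      halfGram A * diagonal (fun c : Fin (n + 1) => if Odd n ∧ c = 0 then (1 : ℤ) else 2) := by
    ext r c
    rw [mul_diagonal, Vmat_gram hA]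
    by_cases h : Odd n ∧ c = 0
    · simp [halfGram, h]
    · simp only [halfGram, of_apply, if_neg h]
      refine (Int.ediv_mul_cancel (two_dvd_walkCount' hA _ ?_)).symm
      rw [not_and_or, Nat.not_odd_iff_even] at h
      refine h.imp_right fun h => ?_
      have := Fin.pos_iff_ne_zero.2 h
      have : 0 < (c : ℕ) := this
      omega
  have hprod : ∏ c : Fin (n + 1), (if Odd n ∧ c = 0 then (1 : ℤ) else 2) =
      2 ^ (2 * ((n + 2) / 2 - 1) + 1) := by
    rw [Fin.prod_univ_succ]
    obtain ⟨s, rfl | rfl⟩ := Nat.even_or_odd' n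
    · have : ¬ Odd (2 * s) := by simp
      simp only [this, false_and, if_false, Finset.prod_const, Finset.card_univ, Fintype.card_fin]
      rw [← pow_succ']
      congr 1
      omega
    · simp only [Fin.succ_ne_zero, and_false, and_true, if_false, Finset.prod_const,
        Finset.card_univ, Fintype.card_fin]
      rw [if_pos (by simp), one_mul]
      congr 1
      omega
  rw [hfac, det_mul, det_diagonal, hprod] at hdet
  have : (halfGram A).det = b ^ 2 := by
    have h2 : (2 : ℤ) ^ (2 * ((n + 2) / 2 - 1) + 1) ≠ 0 := by positivity
    apply mul_right_cancel₀ h2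
    rw [hdet]
    ring
  rw [this]
  exact hb.pow

lemma WT_tildeW1_apply {A : Matrix (Fin (n + 2)) (Fin (n + 2)) ℤ} (hA : A.IsAdjMatrix)
    (i : Fin (n + 2)) (j : Fin ((n + 2) / 2)) :
    ((walkMatrix A)ᵀ * tildeW1 A) i j =
      walkCount A (if Even n then i + 2 * j else i + (2 * j + 2)) := by
  split_ifs with h
  · rw [← walkCount_add hA.symm, mul_apply]
    simp [walkMatrix, tildeW1, h, dotProduct]
  · rw [← walkCount_add hA.symm, mul_apply]
    simp [walkMatrix, tildeW1, h, dotProduct]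

/-- every entry of `W(G)ᵀ·W̃₁` is even and `(1/2)·W(G)ᵀ·W̃₁` has full
column rank `⌊n/2⌋` over `𝔽₂`. -/
theorem half_WT_tildeW1_full_rank_mod_two
    (n : ℕ) (A : Matrix (Fin (n + 2)) (Fin (n + 2)) ℤ)
    (hA : A.IsAdjMatrix) (hac : IsAlmostControllable A)
    (τ τ' : Fin (n + 2)) (hne : τ ≠ τ') (htw : IsTwinPair A τ τ')
    (b : ℤ) (hodd : Odd b) (hsf : Squarefree b) (hpos : 0 < b)
    (hcof : cofactorLast A τ = 2 ^ ((n + 2) / 2 - 1) * b ∨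
            cofactorLast A τ = -(2 ^ ((n + 2) / 2 - 1) * b)) :
    (∀ i j, (2 : ℤ) ∣ ((walkMatrix A)ᵀ * tildeW1 A) i j) ∧
    ((Matrix.of fun i j => (((walkMatrix A)ᵀ * tildeW1 A) i j) / 2).map
      ((↑) : ℤ → ZMod 2)).rank = (n + 2) / 2 := by
  have hdvd : ∀ i j, (2 : ℤ) ∣ ((walkMatrix A)ᵀ * tildeW1 A) i j := by
    intro i j
    rw [WT_tildeW1_apply hA]
    apply two_dvd_walkCount' hA
    split_ifs with h
    · exact Or.inl h
    · exact Or.inr (by omega)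
  refine ⟨hdvd, rank_eq_of_mulVec_injective fun u hu => ?_⟩
  have hX : (Xmat A τ).det ^ 2 = (2 ^ ((n + 2) / 2 - 1) * b) ^ 2 := by
    have h1 : (Xmat A τ).det ^ 2 = cofactorLast A τ ^ 2 := by
      rw [cofactorLast, mul_pow, ← pow_mul, mul_comm _ 2, pow_mul]
      simp
    rw [h1]
    rcases hcof with h | h <;> rw [h]
    ring
  have hGdet : Odd (halfGram A).det :=
    odd_det_halfGram hA hodd (by rw [det_gram hne htw, hX])
  have hu' : ∀ i : Fin (n + 2), ∑ j : Fin ((n + 2) / 2),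
      ((walkCount A (if Even n then i + 2 * j else i + (2 * j + 2)) / 2 : ℤ) : ZMod 2) * u j
        = 0 := by
    intro i
    have := congrFun hu i
    simpa only [mulVec, dotProduct, map_apply, of_apply, WT_tildeW1_apply hA,
      Pi.zero_apply] using this
  by_cases hn : Even n
  · have hno : ¬ Odd n := by simpa using hn
    -- `f` picks the column of `V` holding `A^{2j} e`
    let f : Fin ((n + 2) / 2) → Fin (n + 1) := fun j => ⟨2 * j, by
      obtain ⟨s, rfl⟩ := hn; omega⟩
    have hf : Function.Injective f := fun i j h => by
      have := congrArg Fin.val h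
      simp only [f] at this
      exact Fin.ext (by omega)
    have hv : ((halfGram A).map ((↑) : ℤ → ZMod 2)) *ᵥ (∑ j, Pi.single (f j) (u j)) = 0 := by
      ext r
      rw [mulVec_sum, Finset.sum_apply, Pi.zero_apply, ← hu' r.castSucc]
      refine Finset.sum_congr rfl fun j _ => ?_
      simp [mulVec_single, halfGram, hno, hn, f, mul_comm]
    have h0 := mulVec_eq_zero_of_odd_det hGdet hv
    ext j
    have := congrFun h0 (f j)
    rw [Finset.sum_apply, Finset.sum_eq_single j] at this
    · simpa using this
    · intro i _ hij
      exact Pi.single_eq_of_ne (hf.ne hij.symm) _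
    · simp
  · have hno : Odd n := by simpa using hn
    -- `f` picks the column of `V` holding `A^{2j+1} e`
    let f : Fin ((n + 2) / 2) → Fin (n + 1) := fun j => ⟨2 * j + 1, by
      obtain ⟨s, rfl⟩ := hno; omega⟩
    have hf : Function.Injective f := fun i j h => by
      have := congrArg Fin.val h
      simp only [f] at this
      exact Fin.ext (by omega)
    have hf0 : ∀ j, f j ≠ 0 := fun j h => by
      have := congrArg Fin.val h
      simp [f] at this
    -- coefficient of the first column that annihilates row `0`
    let s : ZMod 2 := ∑ j : Fin ((n + 2) / 2), ((walkCount A (2 * j + 1) / 2 : ℤ) : ZMod 2) * u j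
    have hv : ((halfGram A).map ((↑) : ℤ → ZMod 2)) *ᵥ
        (Pi.single 0 s + ∑ j, Pi.single (f j) (u j)) = 0 := by
      have hsum : ∀ r : Fin (n + 1), (((halfGram A).map ((↑) : ℤ → ZMod 2)) *ᵥ
          (Pi.single 0 s + ∑ j, Pi.single (f j) (u j))) r =
          ((walkCount A r : ℤ) : ZMod 2) * s + ∑ j : Fin ((n + 2) / 2),
            ((walkCount A (r + (2 * j + 1)) / 2 : ℤ) : ZMod 2) * u j := by
        intro r
        rw [mulVec_add, mulVec_sum, Pi.add_apply, Finset.sum_apply]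
        congr 1
        · simp [mulVec_single, halfGram, hno]
        · refine Finset.sum_congr rfl fun j _ => ?_
          simp [mulVec_single, halfGram, hf0, f]
      ext r
      rw [hsum, Pi.zero_apply]
      refine Fin.cases ?_ (fun r => ?_) r
      · have h1 : ((walkCount A 0 : ℤ) : ZMod 2) = 1 := by
          rw [walkCount_zero]
          have h2 : ((n : ℕ) : ZMod 2) = 1 := ZMod.natCast_eq_one_iff_odd.2 hno
          have h3 : (2 : ZMod 2) = 0 := rfl
          push_cast
          rw [h2, h3, add_zero]
        simp only [Fin.val_zero, h1, one_mul, zero_add]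
        exact CharTwo.add_self_eq_zero s
      · have h1 : ((walkCount A (r.succ : Fin (n + 1)) : ℤ) : ZMod 2) = 0 :=
          (ZMod.intCast_zmod_eq_zero_iff_dvd _ 2).2 (two_dvd_walkCount hA _ (by simp))
        rw [h1, zero_mul, zero_add, ← hu' r.castSucc.castSucc]
        refine Finset.sum_congr rfl fun j _ => ?_
        simp only [hn, if_false, Fin.val_succ, Fin.val_castSucc]
        congr 4
        omega
    have h0 := mulVec_eq_zero_of_odd_det hGdet hv
    ext j
    have := congrFun h0 (f j)
    rw [Pi.add_apply, Pi.single_eq_of_ne (hf0 j), zero_add, Finset.sum_apply,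
      Finset.sum_eq_single j] at this
    · simpa using this
    · intro i _ hij
      exact Pi.single_eq_of_ne (hf.ne hij.symm) _
    · simp

end AlmostControllableGraphs
end
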